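/- arXiv:2409.13134 — 7 statements merged into one kernel-verified Lean document; each statement's English description precedes it below -/
import Mathlib

section
/- Let M̄ = (M_n : n < ω) ∈ 𝕄 and suppose the set I_* = {n < ω : the action of Aut(M_n) on M_n is not free} is infinite. Then for every ordinal α < (2^{ℵ₀})⁺ there is an elementary substructure M of ∏_n M_n with sr(M) ≥ α. In particular, the Scott ranks of models of Th(∏_n M_n) are unbounded below (2^{ℵ₀})⁺. -/
open FirstOrder

universe u v w

namespace ScottTools

variable (L : FirstOrder.Language.{u, v}) (M : Type w) (N : Type w) [L.Structure M] [L.Structure N]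

/-- Two tuples (of the same length) have the same quantifier-free type. -/
def QFEquiv {n : ℕ} (a : Fin n → M) (b : Fin n → N) : Prop :=
  ∀ φ : L.Formula (Fin n), φ.IsQF → (φ.Realize a ↔ φ.Realize b)

/-- The ordinal-indexed back-and-forth equivalence `(M, ā) ≡_α (N, b̄)`:
`≡₀` is equality of quantifier-free types, `≡_{α+1}` is the back-and-forth condition
with respect to `≡_α`, and limit stages are intersections. -/
def BFEquiv : Ordinal.{w} → (n : ℕ) → (Fin n → M) → (Fin n → N) → Prop
  | α, n, a, b =>
    QFEquiv L M N a b ∧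
    ∀ β : Ordinal.{w}, β < α →
      (∀ x : M, ∃ y : N, BFEquiv β (n + 1) (Fin.snoc a x) (Fin.snoc b y)) ∧
      (∀ y : N, ∃ x : M, BFEquiv β (n + 1) (Fin.snoc a x) (Fin.snoc b y))
  termination_by α => α

/-- `(M, ā) ≡_∞ (N, b̄)`: back-and-forth equivalent for all ordinals. -/
def BFEquivInf (n : ℕ) (a : Fin n → M) (b : Fin n → N) : Prop :=
  ∀ α : Ordinal.{w}, BFEquiv L M N α n a b

/-- The Scott rank of a structure: the least ordinal `α` such that any two finite tuples
that are `≡_α`-equivalent are `≡_∞`-equivalent. -/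
noncomputable def ScottRank : Ordinal.{w} :=
  sInf {α : Ordinal.{w} | ∀ (n : ℕ) (a b : Fin n → M),
    BFEquiv L M M α n a b → BFEquivInf L M M n a b}

/-- `B` is a base for `M`: distinct elements of `M` have distinct complete first-order
types over `B`. -/
def IsBase (B : Set M) : Prop :=
  ∀ a b : M,
    (∀ (k : ℕ) (p : Fin k → M), (∀ i, p i ∈ B) →
      ∀ φ : L.Formula (Fin (k + 1)),
        (φ.Realize (Fin.snoc p a) ↔ φ.Realize (Fin.snoc p b))) →
    a = b

end ScottTools

namespace ProdStr

open FirstOrder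

/-- A purely relational language, with relation symbols `Rs k` of arity `k`. -/
def relLang (Rs : ℕ → Type) : FirstOrder.Language :=
  ⟨fun _ => Empty, Rs⟩

/-- The combined language of the product `∏ₙ Mₙ`: the (disjoint) union of all the
relational languages `ℒₙ` (with relations `Rs n k` of arity `k`), together with new
binary relation symbols `Eₙ` for `n < ω`. -/
def prodLang (Rs : ℕ → ℕ → Type) : FirstOrder.Language :=
  ⟨fun _ => Empty, fun k => (Σ n : ℕ, Rs n k) ⊕ (PLift (k = 2) × ℕ)⟩

/-- The product structure `∏ₙ Mₙ`: `E_m(a,b)` iff `a m = b m`, and `R(ā)` iff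
`Mₘ ⊨ R(ā(m))` for `R` a relation of `ℒₘ`. -/
instance prodStructure (Rs : ℕ → ℕ → Type) (Mf : ℕ → Type)
    [∀ n, (relLang (Rs n)).Structure (Mf n)] :
    (prodLang Rs).Structure (∀ n, Mf n) where
  funMap := fun f _ => f.elim
  RelMap := fun {k} r x =>
    match r with
    | Sum.inl ⟨n, R⟩ =>
        Language.Structure.RelMap (L := relLang (Rs n)) (M := Mf n)
          (R : (relLang (Rs n)).Relations k) (fun i => x i n)
    | Sum.inr ⟨h, m⟩ => x (Fin.cast h.down.symm 0) m = x (Fin.cast h.down.symm 1) m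

/-- The action of `Aut(Mₙ)` on `Mₙ` is free: any automorphism with a fixed point is the
identity. -/
def FreeAut (Rs : ℕ → ℕ → Type) (Mf : ℕ → Type)
    [∀ n, (relLang (Rs n)).Structure (Mf n)] (n : ℕ) : Prop :=
  ∀ σ : Mf n ≃[relLang (Rs n)] Mf n, ∀ x : Mf n, σ x = x → ∀ y : Mf n, σ y = y

end ProdStr

open ScottTools ProdStr FirstOrder

section Combinatorics

open Cardinal Filter

lemma exists_evdiff (X : Type) (hX : #X ≤ 2 ^ ℵ₀) :
    ∃ f : X → (n : ℕ) → Fin n → Bool, ∀ x y, x ≠ y → ∃ n₀, ∀ n, n₀ ≤ n → f x n ≠ f y n := by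
  have h1 : #X ≤ #(ℕ → Bool) := by simpa using hX
  obtain ⟨e⟩ := Cardinal.le_def _ _ |>.1 h1
  refine ⟨fun x n i => e x i, ?_⟩
  intro x y hxy
  have : e x ≠ e y := fun h => hxy (e.injective h)
  obtain ⟨m, hm⟩ := Function.ne_iff.1 this
  refine ⟨m + 1, fun n hn h => hm ?_⟩
  exact congrFun h ⟨m, by omega⟩

lemma exists_sets (X : Type) (hX : #X ≤ 2 ^ ℵ₀) (I : Set ℕ) (hI : I.Infinite) :
    ∃ A : X → Set ℕ, (∀ x, A x ⊆ I) ∧ (∀ x y, x ≠ y → (A x ∩ A y).Infinite) ∧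
      (∀ x y z, x ≠ y → y ≠ z → x ≠ z → (A x ∩ A y ∩ A z).Finite) := by
  classical
  obtain ⟨f, hf⟩ := exists_evdiff X hX
  have : Infinite I := hI.to_subtype
  let Q := Σ n : ℕ, (Fin n → Bool) × (Fin n → Bool)
  obtain ⟨en, hen⟩ := Countable.exists_injective_nat Q
  let q : Q → ℕ := fun p => (Nat.orderEmbeddingOfSet I (en p) : ℕ)
  have hq : Function.Injective q := fun a b h =>
    hen ((Nat.orderEmbeddingOfSet I).injective h)
  let B : X → Set Q := fun x => {p | f x p.1 = p.2.1 ∨ f x p.1 = p.2.2}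
  refine ⟨fun x => q '' (B x), ?_, ?_, ?_⟩
  · rintro x _ ⟨p, -, rfl⟩
    have h : q p ∈ Set.range (Nat.orderEmbeddingOfSet I) := Set.mem_range_self _
    rwa [Nat.orderEmbeddingOfSet_range I] at h
  · intro x y hxy
    rw [← Set.image_inter hq]
    refine Set.Infinite.image hq.injOn ?_
    refine Set.infinite_of_injective_forall_mem (f := fun n : ℕ => (⟨n, f x n, f y n⟩ : Q)) ?_ ?_
    · intro a b h
      exact congrArg Sigma.fst h
    · intro n
      exact ⟨Or.inl rfl, Or.inr rfl⟩
  · intro x y z hxy hyz hxz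
    rw [← Set.image_inter hq, ← Set.image_inter hq]
    refine Set.Finite.image q ?_
    obtain ⟨n1, h1⟩ := hf x y hxy
    obtain ⟨n2, h2⟩ := hf y z hyz
    obtain ⟨n3, h3⟩ := hf x z hxz
    refine Set.Finite.subset (s := ⋃ n ∈ Set.Iio (n1 + n2 + n3),
      Set.range (fun u : (Fin n → Bool) × (Fin n → Bool) => (⟨n, u⟩ : Q))) ?_ ?_
    · exact (Set.finite_Iio _).biUnion fun n _ => Set.finite_range _
    · rintro ⟨n, i, j⟩ ⟨⟨hx, hy⟩, hz⟩
      simp only [B, Set.mem_ofPred_eq] at hx hy hz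
      simp only [Set.mem_iUnion, Set.mem_Iio]
      have e1 := h1 n
      have e2 := h2 n
      have e3 := h3 n
      refine ⟨n, ?_, ⟨(i, j), rfl⟩⟩
      grind

lemma exists_tree (α : Ordinal.{0}) (hα : α < (Order.succ (2 ^ ℵ₀ : Cardinal.{0})).ord) :
    ∃ (T : Type) (par : T → Option T) (rho : T → Ordinal.{0}) (r : T),
      #(Option T) ≤ 2 ^ ℵ₀ ∧ (∀ z t, par z = some t → rho z < rho t) ∧
      (∀ t γ, γ < rho t → ∀ F : Finset T, ∃ z, z ∉ F ∧ par z = some t ∧ γ ≤ rho z) ∧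
      rho r = α ∧ par r = none := by
  classical
  let o : α.ToType → Ordinal.{0} := fun w => (Ordinal.ToType.toOrd w).1
  have ho : ∀ w, o w < α := fun w => (Ordinal.ToType.toOrd w).2
  have ho2 : ∀ γ, γ < α → ∃ w, o w = γ := fun γ h =>
    ⟨Ordinal.ToType.mk ⟨γ, h⟩, by simp [o]⟩
  let rho : List (α.ToType × ℕ) → Ordinal.{0} := fun l =>
    match l with
    | [] => α
    | e :: _ => o e.1
  let par : List (α.ToType × ℕ) → Option (List (α.ToType × ℕ)) := fun l =>
    match l with
    | [] => none
    | e :: l => if o e.1 < rho l then some l else none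
  have hrho : ∀ l, rho l ≤ α := by
    intro l
    cases l with
    | nil => exact le_rfl
    | cons e l => exact (ho _).le
  refine ⟨List (α.ToType × ℕ), par, rho, [], ?_, ?_, ?_, rfl, rfl⟩
  · have h1 : #(α.ToType) ≤ 2 ^ ℵ₀ := by
      rw [Cardinal.mk_toType]
      exact Order.lt_succ_iff.1 (Cardinal.lt_ord.1 hα)
    have h0 : ℵ₀ ≤ (2 ^ ℵ₀ : Cardinal.{0}) := (Cardinal.cantor _).le
    have h2 : #(α.ToType × ℕ) ≤ 2 ^ ℵ₀ := by
      rw [Cardinal.mk_prod, Cardinal.lift_id, Cardinal.lift_id]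
      exact (mul_le_mul' h1 (by simpa using h0)).trans (Cardinal.mul_eq_self h0).le
    have h3 : #(List (α.ToType × ℕ)) ≤ 2 ^ ℵ₀ :=
      (Cardinal.mk_list_le_max _).trans (max_le h0 h2)
    rw [Cardinal.mk_option]
    exact Cardinal.add_le_of_le h0 h3 (Cardinal.one_le_aleph0.trans h0)
  · intro z t h
    cases z with
    | nil => simp [par] at h
    | cons e l =>
      simp only [par] at h
      split_ifs at h with h'
      · cases h
        exact h'
  · intro t γ hγ F
    obtain ⟨w, hw⟩ := ho2 γ (hγ.trans_le (hrho t))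
    have hinf : (Set.range (fun n : ℕ => (w, n) :: t)).Infinite :=
      Set.infinite_range_of_injective (fun a b h => by simpa using h)
    obtain ⟨z, ⟨n, rfl⟩, hz⟩ := hinf.exists_notMem_finset F
    refine ⟨_, hz, ?_, ?_⟩
    · simp only [par]
      rw [if_pos (by simpa [hw] using hγ)]
    · simp [rho, hw]

/-- Thin out an infinite set so that the periods behave uniformly. -/
lemma exists_period (p : ℕ → ℕ) (I : Set ℕ) (hI : I.Infinite) :
    ∃ (J : Set ℕ) (N : ℤ), J ⊆ I ∧ J.Infinite ∧
      ∀ k : ℤ, ∀ᶠ n in cofinite, n ∈ J → (((p n : ℕ) : ℤ) ∣ k ↔ N ∣ k) := by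
  by_cases h : ∃ N : ℕ, (I ∩ {n | p n = N}).Infinite
  · obtain ⟨N, hN⟩ := h
    refine ⟨_, N, Set.inter_subset_left, hN, fun k => Eventually.of_forall ?_⟩
    rintro n ⟨-, hn⟩
    rw [Set.mem_ofPred_eq] at hn
    rw [hn]
  · push Not at h
    refine ⟨I, 0, subset_rfl, hI, fun k => ?_⟩
    rcases eq_or_ne k 0 with rfl | hk
    · simp
    · have hfin : (⋃ N ∈ Set.Iic k.natAbs, (I ∩ {n | p n = N})).Finite :=
        (Set.finite_Iic _).biUnion fun N _ => by simpa using h N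
      refine Filter.eventually_cofinite.2 (hfin.subset ?_)
      intro n hn
      simp only [Set.mem_ofPred_eq, Classical.not_imp] at hn
      simp only [Set.mem_iUnion, Set.mem_Iic]
      refine ⟨p n, ?_, hn.1, rfl⟩
      have h2 : ((p n : ℕ) : ℤ) ∣ k := by
        by_contra h3
        exact hn.2 ⟨fun h => absurd h h3, fun h => absurd (zero_dvd_iff.1 h) hk⟩
      exact Nat.le_of_dvd (Int.natAbs_pos.2 hk) (Int.natCast_dvd.1 h2)

end Combinatorics
section ScottGeneral

open ScottTools FirstOrder

variable {L : FirstOrder.Language.{0, 0}} {M : Type} [L.Structure M]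

lemma bf_iff (α : Ordinal.{0}) (n : ℕ) (a b : Fin n → M) :
    BFEquiv L M M α n a b ↔ QFEquiv L M M a b ∧
    ∀ β : Ordinal.{0}, β < α →
      (∀ x : M, ∃ y : M, BFEquiv L M M β (n + 1) (Fin.snoc a x) (Fin.snoc b y)) ∧
      (∀ y : M, ∃ x : M, BFEquiv L M M β (n + 1) (Fin.snoc a x) (Fin.snoc b y)) := by
  rw [BFEquiv]

lemma bf_mono {α β : Ordinal.{0}} (h : β ≤ α) {n : ℕ} {a b : Fin n → M}
    (H : BFEquiv L M M α n a b) : BFEquiv L M M β n a b := by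
  rw [bf_iff] at H ⊢
  exact ⟨H.1, fun γ hγ => H.2 γ (hγ.trans_le h)⟩

lemma bfInf_step {n : ℕ} {a b : Fin n → M} (H : BFEquivInf L M M n a b) (x : M) :
    ∃ y : M, BFEquivInf L M M (n + 1) (Fin.snoc a x) (Fin.snoc b y) := by
  by_contra hcon
  simp only [BFEquivInf] at hcon
  push Not at hcon
  choose g hg using hcon
  have h1 := H (Order.succ (⨆ y, g y))
  rw [bf_iff] at h1
  obtain ⟨y, hy⟩ := (h1.2 _ (Order.lt_succ _)).1 x
  exact hg y (bf_mono (Ordinal.le_iSup g y) hy)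

lemma le_scottRank (α : Ordinal.{0})
    (h : ∀ β < α, ∃ (n : ℕ) (a b : Fin n → M),
      BFEquiv L M M β n a b ∧ ¬ BFEquivInf L M M n a b) :
    α ≤ ScottRank L M := by
  refine le_csInf ?_ ?_
  · have : ∀ p : Σ n : ℕ, (Fin n → M) × (Fin n → M), ∃ γ : Ordinal.{0},
        BFEquiv L M M γ p.1 p.2.1 p.2.2 → BFEquivInf L M M p.1 p.2.1 p.2.2 := by
      intro p
      by_cases hp : BFEquivInf L M M p.1 p.2.1 p.2.2
      · exact ⟨0, fun _ => hp⟩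
      · have hp' := hp
        simp only [BFEquivInf] at hp'
        push Not at hp'
        obtain ⟨γ, hγ⟩ := hp'
        exact ⟨γ, fun h => absurd h hγ⟩
    choose g hg using this
    refine ⟨⨆ p, g p, ?_⟩
    intro n a b H
    exact hg ⟨n, a, b⟩ (bf_mono (Ordinal.le_iSup g ⟨n, a, b⟩) H)
  · intro β hβ
    by_contra hlt
    obtain ⟨n, a, b, h1, h2⟩ := h β (not_le.1 hlt)
    exact h2 (hβ n a b h1)

end ScottGeneral

section Elementary

open ProdStr FirstOrder FirstOrder.Language

variable {Rs : ℕ → ℕ → Type} {Mf : ℕ → Type} [∀ n, (relLang (Rs n)).Structure (Mf n)]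

lemma term_realize_comm {β : Type} (t : (prodLang Rs).Term β)
    (π : (∀ n, Mf n) → (∀ n, Mf n)) (v : β → ∀ n, Mf n) :
    t.realize (π ∘ v) = π (t.realize v) := by
  cases t with
  | var i => rfl
  | func f ts => exact (f : Empty).elim

lemma exists_support {β : Type} {m : ℕ} (φ : (prodLang Rs).BoundedFormula β m) :
    ∃ F : Finset ℕ, ∀ π : Equiv.Perm (∀ n, Mf n), (∀ x, ∀ n ∈ F, π x n = x n) →
      ∀ (v : β → ∀ n, Mf n) (xs : Fin m → ∀ n, Mf n),
        φ.Realize (π ∘ v) (π ∘ xs) ↔ φ.Realize v xs := by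
  classical
  induction φ with
  | falsum => exact ⟨∅, fun π _ v xs => Iff.rfl⟩
  | equal t₁ t₂ =>
    refine ⟨∅, fun π _ v xs => ?_⟩
    simp only [BoundedFormula.Realize, ← Sum.comp_elim, term_realize_comm]
    exact π.injective.eq_iff
  | rel R ts =>
    rcases R with ⟨n, R⟩ | ⟨h, n⟩
    · refine ⟨{n}, fun π hπ v xs => ?_⟩
      simp only [BoundedFormula.Realize, ← Sum.comp_elim, term_realize_comm]
      simp only [Structure.RelMap]
      simp only [hπ _ n (Finset.mem_singleton_self n)]
    · refine ⟨{n}, fun π hπ v xs => ?_⟩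
      simp only [BoundedFormula.Realize, ← Sum.comp_elim, term_realize_comm]
      simp only [Structure.RelMap]
      simp only [hπ _ n (Finset.mem_singleton_self n)]
  | imp φ ψ h1 h2 =>
    obtain ⟨F1, h1⟩ := h1
    obtain ⟨F2, h2⟩ := h2
    refine ⟨F1 ∪ F2, fun π hπ v xs => ?_⟩
    simp only [BoundedFormula.realize_imp]
    rw [h1 π (fun x n hn => hπ x n (Finset.mem_union_left _ hn)),
      h2 π (fun x n hn => hπ x n (Finset.mem_union_right _ hn))]
  | all φ ih =>
    obtain ⟨F, h⟩ := ih
    refine ⟨F, fun π hπ v xs => ?_⟩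
    simp only [BoundedFormula.realize_all]
    constructor
    · intro H a
      rw [← h π hπ, Fin.comp_snoc]
      exact H _
    · intro H a
      have := (h π hπ v (Fin.snoc xs (π.symm a))).2 (H _)
      rw [Fin.comp_snoc, Equiv.apply_symm_apply] at this
      exact this

/-- A nonempty set closed under finite modifications is an elementary substructure. -/
lemma exists_elementary [∀ n, Fintype (Mf n)] (hcard : ∀ n, 2 ≤ Fintype.card (Mf n))
    (S : Set (∀ n, Mf n)) (c : ∀ n, Mf n)
    (hc : ∀ x : ∀ n, Mf n, (∀ᶠ n in Filter.cofinite, x n = c n) → x ∈ S) :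
    ∃ S' : (prodLang Rs).ElementarySubstructure (∀ n, Mf n), ∀ x, x ∈ S' ↔ x ∈ S := by
  classical
  let S₀ : (prodLang Rs).Substructure (∀ n, Mf n) := ⟨S, fun f => (f : Empty).elim⟩
  refine ⟨S₀.toElementarySubstructure ?_, fun x => Iff.rfl⟩
  intro k φ xs a ha
  by_cases haS : a ∈ S
  · exact ⟨⟨a, haS⟩, ha⟩
  obtain ⟨F, hF⟩ := exists_support (Mf := Mf) φ
  have hne : ∀ n, ∃ e : Mf n, e ≠ c n := fun n => by
    have : Nontrivial (Mf n) := Fintype.one_lt_card_iff_nontrivial.1 (hcard n)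
    exact exists_ne _
  choose e he using hne
  let g : ℕ → ∀ n, Mf n := fun m n => if n ∈ F then a n else if n = m then e n else c n
  have hginj : Set.InjOn g (↑F : Set ℕ)ᶜ := by
    intro m hm m' hm' h
    by_contra hne
    have h1 := congrFun h m
    have hmF : m ∉ F := by simpa using hm
    simp only [g, hmF, if_false, if_true, hne] at h1
    exact he m h1
  have hinf : (g '' (↑F : Set ℕ)ᶜ).Infinite :=
    Set.Infinite.image hginj F.finite_toSet.infinite_compl
  obtain ⟨b, ⟨m, -, rfl⟩, hb⟩ := hinf.exists_notMem_finite
    (Set.finite_range (fun i => (xs i : ∀ n, Mf n)))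
  have hbS : g m ∈ S := by
    refine hc _ (Filter.eventually_cofinite.2 ((insert m F).finite_toSet.subset ?_))
    intro n hn
    by_contra h
    simp only [Finset.coe_insert, Set.mem_insert_iff, Finset.mem_coe, not_or] at h
    exact hn (by simp [g, h.1, h.2])
  refine ⟨⟨g m, hbS⟩, ?_⟩
  have key := (hF (Equiv.swap a (g m)) ?_ default (Fin.snoc ((↑) ∘ xs) a)).2 ha
  · rw [Fin.comp_snoc, Equiv.swap_apply_left] at key
    convert key using 2
    funext i
    simp only [Function.comp]
    rw [Equiv.swap_apply_of_ne_of_ne]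
    · intro h
      exact haS (h ▸ (xs i).2)
    · intro h
      exact hb ⟨i, h⟩
  · intro x n hn
    have hag : g m n = a n := by simp [g, hn]
    rw [Equiv.swap_apply_def]
    split_ifs with h1 h2
    · rw [h1, hag]
    · rw [h2, hag]
    · rfl

end Elementary
/-- The combinatorial data from which the elementary substructure is built. -/
structure CodeSetup (Mf : ℕ → Type) where
  T : Type
  par : T → Option T
  rho : T → Ordinal.{0}
  rho_lt : ∀ z t, par z = some t → rho z < rho t
  fresh : ∀ t γ, γ < rho t → ∀ F : Finset T, ∃ z, z ∉ F ∧ par z = some t ∧ γ ≤ rho z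
  I : Set ℕ
  A : Option T → Set ℕ
  A_sub : ∀ x, A x ⊆ I
  A_inf : ∀ x y, x ≠ y → (A x ∩ A y).Infinite
  A_fin : ∀ x y z, x ≠ y → y ≠ z → x ≠ z → (A x ∩ A y ∩ A z).Finite
  σ : ∀ n, Equiv.Perm (Mf n)
  c : ∀ n, Mf n
  d : ∀ n, Mf n
  N : ℤ
  σ_c : ∀ n, σ n (c n) = c n
  σ_d : ∀ n ∈ I, σ n (d n) ≠ d n
  hN : ∀ k : ℤ, ∀ᶠ n in Filter.cofinite, n ∈ I → ((σ n ^ k) (d n) = d n ↔ N ∣ k)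

namespace CodeSetup

open Filter
open scoped Classical

variable {Mf : ℕ → Type} (Z : CodeSetup Mf)

noncomputable section

/-- The set of coordinates coding the edge from `y` to its parent. -/
def C (y : Z.T) : Set ℕ := Z.A (some y) ∩ Z.A (Z.par y)

/-- The vector of exponents attached to an edge labelling. -/
def K : (Z.T →₀ ℤ) →ₗ[ℤ] (ℕ → ℤ) :=
  Finsupp.linearCombination ℤ (fun y => (Z.C y).indicator (fun _ => (1 : ℤ)))

/-- The sum of the labels at the vertex `t`. -/
def D (t : Z.T) : (Z.T →₀ ℤ) →ₗ[ℤ] ℤ :=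
  Finsupp.linearCombination ℤ
    (fun z => (if z = t then 1 else 0) + (if Z.par z = some t then 1 else 0))

/-- The action of exponent vectors. -/
def act (k : ℕ → ℤ) (x : ∀ n, Mf n) : ∀ n, Mf n := fun n => (Z.σ n ^ k n) (x n)

/-- The basic element at vertex `t`. -/
def dd (t : Z.T) : ∀ n, Mf n := fun n => if n ∈ Z.A (some t) then Z.d n else Z.c n

/-- Elements of the universe over the vertex `t`. -/
def Ty (t : Z.T) (x : ∀ n, Mf n) : Prop :=
  ∃ κ, Z.D t κ = 0 ∧ ∀ᶠ n in cofinite, x n = Z.act (Z.K κ) (Z.dd t) n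

/-- The universe of the elementary substructure. -/
def univ : Set (∀ n, Mf n) :=
  {x | (∀ᶠ n in cofinite, x n = Z.c n) ∨ ∃ t, Z.Ty t x}

variable {Z}

lemma par_ne (y : Z.T) : Z.par y ≠ some y := fun h => lt_irrefl _ (Z.rho_lt _ _ h)

lemma C_inf (y : Z.T) : (Z.C y).Infinite := Z.A_inf _ _ (par_ne y).symm

lemma ev_of_finite {s : Set ℕ} (h : s.Finite) : ∀ᶠ n in cofinite, n ∉ s := by
  simpa [eventually_cofinite] using h

lemma C_A_fin {y t : Z.T} (h1 : y ≠ t) (h2 : Z.par y ≠ some t) :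
    (Z.C y ∩ Z.A (some t)).Finite :=
  Z.A_fin _ _ _ (par_ne y).symm h2 (fun h => h1 (Option.some.inj h))

lemma C_C_fin {y z : Z.T} (h : y ≠ z) : (Z.C y ∩ Z.C z).Finite := by
  by_cases h2 : Z.par y = some z
  · have h3 : Z.par z ≠ some y := fun h3 =>
      lt_asymm (Z.rho_lt _ _ h2) (Z.rho_lt _ _ h3)
    refine (C_A_fin h.symm h3).subset ?_
    rintro n ⟨h4, h5⟩
    exact ⟨h5, h4.1⟩
  · refine (C_A_fin h h2).subset ?_
    rintro n ⟨h4, h5⟩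
    exact ⟨h4, h5.1⟩

lemma K_single (y : Z.T) (m : ℤ) (n : ℕ) :
    Z.K (Finsupp.single y m) n = if n ∈ Z.C y then m else 0 := by
  simp [K, Set.indicator_apply]

lemma K_on_C (κ : Z.T →₀ ℤ) (y : Z.T) :
    ∀ᶠ n in cofinite, n ∈ Z.C y → Z.K κ n = κ y := by
  induction κ using Finsupp.induction_linear with
  | zero => simp
  | add f g hf hg =>
    filter_upwards [hf, hg] with n h1 h2 hn
    simp [h1 hn, h2 hn]
  | single z m =>
    by_cases h : z = y
    · subst h
      refine Eventually.of_forall fun n hn => ?_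
      simp [K_single, hn]
    · filter_upwards [ev_of_finite (C_C_fin h)] with n h1 hn
      have : n ∉ Z.C z := fun h2 => h1 ⟨h2, hn⟩
      simp [K_single, this, h]

lemma D_eq (t : Z.T) (κ : Z.T →₀ ℤ) :
    Z.D t κ = κ t + κ.sum (fun z m => if Z.par z = some t then m else 0) := by
  rw [D, Finsupp.linearCombination_apply]
  simp only [smul_eq_mul, mul_add, mul_ite, mul_one, mul_zero, Finsupp.sum_add]
  congr 1
  rw [Finsupp.sum_ite_eq']
  simp only [Finsupp.mem_support_iff, ite_not, ite_eq_right_iff]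
  exact fun h => h.symm

lemma D_single (t z : Z.T) (m : ℤ) : Z.D t (Finsupp.single z m) =
    m * ((if z = t then 1 else 0) + (if Z.par z = some t then 1 else 0)) := by
  simp [D]

lemma D_eq_self (t : Z.T) (κ : Z.T →₀ ℤ) (h : ∀ z, Z.par z = some t → κ z = 0) :
    Z.D t κ = κ t := by
  rw [D_eq, Finsupp.sum, Finset.sum_eq_zero, add_zero]
  intro z _
  split_ifs with h1
  · exact h z h1
  · rfl

lemma exists_child (t : Z.T) (κ : Z.T →₀ ℤ) (h0 : Z.D t κ = 0) (h : ¬ Z.N ∣ κ t) :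
    ∃ z, Z.par z = some t ∧ ¬ Z.N ∣ κ z := by
  by_contra hcon
  push Not at hcon
  rw [D_eq] at h0
  refine h ((dvd_add_left ?_).1 (h0 ▸ dvd_zero Z.N))
  refine Finset.dvd_sum fun z _ => ?_
  dsimp only
  split_ifs with h1
  · exact hcon z h1
  · exact dvd_zero _

lemma zpow_c (n : ℕ) (m : ℤ) : (Z.σ n ^ m) (Z.c n) = Z.c n :=
  Equiv.Perm.zpow_apply_eq_self_of_apply_eq_self (Z.σ_c n) m

lemma zpow_d_ne (n : ℕ) (hn : n ∈ Z.I) (m : ℤ) : (Z.σ n ^ m) (Z.d n) ≠ Z.c n := by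
  intro h
  have h1 : Z.d n = Z.c n := by
    rw [← zpow_c (Z := Z) n m] at h
    exact (Z.σ n ^ m).injective h
  exact Z.σ_d n hn (by rw [h1, Z.σ_c])

lemma act_add (k l : ℕ → ℤ) (x : ∀ n, Mf n) : Z.act (k + l) x = Z.act k (Z.act l x) := by
  funext n
  simp [act, zpow_add]

lemma act_zero (x : ∀ n, Mf n) : Z.act 0 x = x := by
  funext n
  simp [act]

lemma act_neg_act (k : ℕ → ℤ) (x : ∀ n, Mf n) : Z.act (-k) (Z.act k x) = x := by
  rw [← act_add, neg_add_cancel, act_zero]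

lemma act_act_neg (k : ℕ → ℤ) (x : ∀ n, Mf n) : Z.act k (Z.act (-k) x) = x := by
  rw [← act_add, add_neg_cancel, act_zero]

lemma act_apply_dd (k : ℕ → ℤ) (t : Z.T) (n : ℕ) :
    Z.act k (Z.dd t) n = if n ∈ Z.A (some t) then (Z.σ n ^ k n) (Z.d n) else Z.c n := by
  unfold act dd
  split_ifs
  · rfl
  · exact zpow_c n _

lemma act_dd_eq_c_iff (k : ℕ → ℤ) (t : Z.T) (n : ℕ) :
    Z.act k (Z.dd t) n = Z.c n ↔ n ∉ Z.A (some t) := by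
  rw [act_apply_dd]
  split_ifs with h
  · simp [h, zpow_d_ne n (Z.A_sub _ h)]
  · simp [h]

lemma act_c (k : ℕ → ℤ) {x : ∀ n, Mf n} (hx : ∀ᶠ n in cofinite, x n = Z.c n) :
    ∀ᶠ n in cofinite, Z.act k x n = Z.c n := by
  filter_upwards [hx] with n hn
  rw [act, hn, zpow_c]

lemma act_Ty {k : ℕ → ℤ} {κ : Z.T →₀ ℤ} (hk : ∀ᶠ n in cofinite, k n = Z.K κ n) {t : Z.T}
    (ht : Z.D t κ = 0) {x : ∀ n, Mf n} (hx : Z.Ty t x) : Z.Ty t (Z.act k x) := by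
  obtain ⟨l, h0, hl⟩ := hx
  refine ⟨κ + l, by rw [map_add, ht, h0, add_zero], ?_⟩
  filter_upwards [hk, hl] with n h1 h2
  rw [map_add, act_add]
  simp only [act] at h2 ⊢
  rw [h1, h2]

lemma c_mem : Z.c ∈ Z.univ := Or.inl (Eventually.of_forall fun _ => rfl)

lemma dd_Ty (t : Z.T) : Z.Ty t (Z.dd t) :=
  ⟨0, by simp, Eventually.of_forall fun n => by rw [map_zero, act_zero]⟩

lemma dd_mem (t : Z.T) : Z.dd t ∈ Z.univ := Or.inr ⟨t, dd_Ty t⟩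

/-- Positions in the back-and-forth game from which the duplicator survives `β` rounds. -/
structure Pos (β : Ordinal.{0}) {m : ℕ} (a b : Fin m → ∀ n, Mf n)
    (F : Finset Z.T) (κ : Z.T →₀ ℤ) (k : ℕ → ℤ) : Prop where
  hk : ∀ᶠ n in cofinite, k n = Z.K κ n
  hab : ∀ i, b i = Z.act k (a i)
  ha : ∀ i, (∀ᶠ n in cofinite, a i n = Z.c n) ∨ ∃ t ∈ F, Z.Ty t (a i)
  hD : ∀ t ∈ F, Z.D t κ = 0
  hpar : ∀ y p, κ y ≠ 0 → Z.par y = some p → p ∈ F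
  hrho : ∀ y, y ∉ F → κ y ≠ 0 → β ≤ Z.rho y

lemma Pos.mono {β γ : Ordinal.{0}} (h : γ ≤ β) {m : ℕ} {a b : Fin m → ∀ n, Mf n}
    {F : Finset Z.T} {κ : Z.T →₀ ℤ} {k : ℕ → ℤ} (H : Z.Pos β a b F κ k) :
    Z.Pos γ a b F κ k :=
  ⟨H.hk, H.hab, H.ha, H.hD, H.hpar, fun y h1 h2 => h.trans (H.hrho y h1 h2)⟩

lemma Pos.extend {β γ : Ordinal.{0}} (h : γ < β) {m : ℕ} {a b : Fin m → ∀ n, Mf n}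
    {F : Finset Z.T} {κ : Z.T →₀ ℤ} {k : ℕ → ℤ} (H : Z.Pos β a b F κ k) (t : Z.T) :
    ∃ F' κ' k', Z.Pos γ a b F' κ' k' ∧ t ∈ F' := by
  by_cases htF : t ∈ F
  · exact ⟨F, κ, k, H.mono h.le, htF⟩
  have hch : ∀ z, Z.par z = some t → κ z = 0 := by
    intro z hz
    by_contra hne
    exact htF (H.hpar z t hne hz)
  have hDt : Z.D t κ = κ t := D_eq_self t κ hch
  have ha' : ∀ i, (∀ᶠ n in cofinite, a i n = Z.c n) ∨ ∃ s ∈ insert t F, Z.Ty s (a i) := by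
    intro i
    rcases H.ha i with h1 | ⟨s, hs, h1⟩
    · exact Or.inl h1
    · exact Or.inr ⟨s, Finset.mem_insert_of_mem hs, h1⟩
  by_cases ht0 : κ t = 0
  · refine ⟨insert t F, κ, k, ⟨H.hk, H.hab, ha', ?_, ?_, ?_⟩, Finset.mem_insert_self _ _⟩
    · intro s hs
      rcases Finset.mem_insert.1 hs with rfl | hs
      · rw [hDt, ht0]
      · exact H.hD s hs
    · intro y p h1 h2
      exact Finset.mem_insert_of_mem (H.hpar y p h1 h2)
    · intro y h1 h2
      exact h.le.trans (H.hrho y (fun h3 => h1 (Finset.mem_insert_of_mem h3)) h2)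
  · obtain ⟨z, hzF, hzt, hzr⟩ := Z.fresh t γ (h.trans_le (H.hrho t htF ht0)) F
    have hz0 : κ z = 0 := hch z hzt
    have hzne : z ≠ t := fun h => par_ne z (h ▸ hzt)
    let k' : ℕ → ℤ := fun n =>
      if n ∈ Z.C z ∧ ∀ i, a i n = Z.c n then k n - κ t else k n
    have hac : ∀ i, ∀ᶠ n in cofinite, n ∈ Z.C z → a i n = Z.c n := by
      intro i
      rcases H.ha i with h1 | ⟨s, hs, l, -, h1⟩
      · filter_upwards [h1] with n hn _ using hn
      · have hfin : (Z.C z ∩ Z.A (some s)).Finite := by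
          refine C_A_fin (fun h => hzF (h ▸ hs)) (fun h2 => ?_)
          rw [hzt] at h2
          exact htF (Option.some.inj h2 ▸ hs)
        filter_upwards [h1, ev_of_finite hfin] with n h2 h3 h4
        rw [h2, act_dd_eq_c_iff]
        exact fun h5 => h3 ⟨h4, h5⟩
    refine ⟨insert t F, κ - Finsupp.single z (κ t), k', ⟨?_, ?_, ha', ?_, ?_, ?_⟩,
      Finset.mem_insert_self _ _⟩
    · filter_upwards [H.hk, eventually_all.2 hac] with n h1 h2
      rw [map_sub, Pi.sub_apply, K_single]
      by_cases hn : n ∈ Z.C z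
      · have : n ∈ Z.C z ∧ ∀ i, a i n = Z.c n := ⟨hn, fun i => h2 i hn⟩
        simp only [k']
        rw [if_pos this, if_pos hn, h1]
      · simp [k', hn, h1]
    · intro i
      rw [H.hab i]
      funext n
      simp only [act, k']
      split_ifs with hn
      · rw [hn.2 i, zpow_c, zpow_c]
      · rfl
    · intro s hs
      rw [map_sub, D_single]
      rcases Finset.mem_insert.1 hs with rfl | hs
      · simp [hDt, hzne, hzt]
      · have h1 : z ≠ s := fun h => hzF (h ▸ hs)
        have h2 : Z.par z ≠ some s := fun h2 => by
          rw [hzt] at h2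
          exact htF (Option.some.inj h2 ▸ hs)
        simp [h1, h2, H.hD s hs]
    · intro y p h1 h2
      by_cases hy : y = z
      · subst hy
        rw [hzt] at h2
        rw [← Option.some.inj h2]
        exact Finset.mem_insert_self _ _
      · refine Finset.mem_insert_of_mem (H.hpar y p ?_ h2)
        simpa [Finsupp.single_apply, Ne.symm hy] using h1
    · intro y h1 h2
      by_cases hy : y = z
      · subst hy
        exact hzr
      · refine h.le.trans (H.hrho y (fun h3 => h1 (Finset.mem_insert_of_mem h3)) ?_)
        simpa [Finsupp.single_apply, Ne.symm hy] using h2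

lemma Pos.snoc {β : Ordinal.{0}} {m : ℕ} {a b : Fin m → ∀ n, Mf n}
    {F : Finset Z.T} {κ : Z.T →₀ ℤ} {k : ℕ → ℤ} (H : Z.Pos β a b F κ k) (x y : ∀ n, Mf n)
    (hx : (∀ᶠ n in cofinite, x n = Z.c n) ∨ ∃ t ∈ F, Z.Ty t x) (hy : y = Z.act k x) :
    Z.Pos β (Fin.snoc (α := fun _ => ∀ n, Mf n) a x : Fin (m + 1) → ∀ n, Mf n)
      (Fin.snoc (α := fun _ => ∀ n, Mf n) b y) F κ k := by
  refine ⟨H.hk, ?_, ?_, H.hD, H.hpar, H.hrho⟩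
  · intro i
    refine Fin.lastCases ?_ (fun j => ?_) i
    · simpa using hy
    · simpa using H.hab j
  · intro i
    refine Fin.lastCases ?_ (fun j => ?_) i
    · simpa using hx
    · simpa using H.ha j

/-- The spoiler-duplicator step, without structures. -/
lemma Pos.step {β γ : Ordinal.{0}} (h : γ < β) {m : ℕ} {a b : Fin m → ∀ n, Mf n}
    {F : Finset Z.T} {κ : Z.T →₀ ℤ} {k : ℕ → ℤ} (H : Z.Pos β a b F κ k)
    (x : ∀ n, Mf n) (hx : x ∈ Z.univ) :
    ∃ F' κ' k', Z.Pos γ a b F' κ' k' ∧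
      ((∀ᶠ n in cofinite, x n = Z.c n) ∨ ∃ t ∈ F', Z.Ty t x) := by
  rcases hx with hx | ⟨t, hx⟩
  · exact ⟨F, κ, k, H.mono h.le, Or.inl hx⟩
  · obtain ⟨F', κ', k', H', ht⟩ := H.extend h t
    exact ⟨F', κ', k', H', Or.inr ⟨t, ht, hx⟩⟩

lemma Pos.act_good {β : Ordinal.{0}} {m : ℕ} {a b : Fin m → ∀ n, Mf n}
    {F : Finset Z.T} {κ : Z.T →₀ ℤ} {k : ℕ → ℤ} (H : Z.Pos β a b F κ k) {x : ∀ n, Mf n}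
    (hx : (∀ᶠ n in cofinite, x n = Z.c n) ∨ ∃ t ∈ F, Z.Ty t x) :
    (∀ᶠ n in cofinite, Z.act k x n = Z.c n) ∨ ∃ t ∈ F, Z.Ty t (Z.act k x) := by
  rcases hx with hx | ⟨t, ht, hx⟩
  · exact Or.inl (act_c k hx)
  · exact Or.inr ⟨t, ht, act_Ty H.hk (H.hD t ht) hx⟩

lemma Pos.act_neg_good {β : Ordinal.{0}} {m : ℕ} {a b : Fin m → ∀ n, Mf n}
    {F : Finset Z.T} {κ : Z.T →₀ ℤ} {k : ℕ → ℤ} (H : Z.Pos β a b F κ k) {x : ∀ n, Mf n}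
    (hx : (∀ᶠ n in cofinite, x n = Z.c n) ∨ ∃ t ∈ F, Z.Ty t x) :
    (∀ᶠ n in cofinite, Z.act (-k) x n = Z.c n) ∨ ∃ t ∈ F, Z.Ty t (Z.act (-k) x) := by
  rcases hx with hx | ⟨t, ht, hx⟩
  · exact Or.inl (act_c _ hx)
  · refine Or.inr ⟨t, ht, act_Ty (κ := -κ) ?_ (by rw [map_neg, H.hD t ht, neg_zero]) hx⟩
    filter_upwards [H.hk] with n hn
    simp [hn]

lemma mem_of_good {F : Finset Z.T} {x : ∀ n, Mf n}
    (hx : (∀ᶠ n in cofinite, x n = Z.c n) ∨ ∃ t ∈ F, Z.Ty t x) : x ∈ Z.univ := by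
  rcases hx with hx | ⟨t, _, hx⟩
  · exact Or.inl hx
  · exact Or.inr ⟨t, hx⟩

/-- An element whose set of differences from `c` is exactly `A_y` lies over `y`. -/
lemma Ty_of_support {y : Z.T} {x : ∀ n, Mf n} (hx : x ∈ Z.univ)
    (h : ∀ n, x n = Z.c n ↔ n ∉ Z.A (some y)) : Z.Ty y x := by
  have hinf : (Z.A (some y) ∩ Z.A none).Infinite := Z.A_inf _ _ (by simp)
  rcases hx with hx | ⟨t, hx⟩
  · exfalso
    refine hinf ((eventually_cofinite.1 hx).subset ?_)
    intro n hn h2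
    exact (h n).1 h2 hn.1
  · by_cases hty : t = y
    · exact hty ▸ hx
    · exfalso
      obtain ⟨l, -, hl⟩ := hx
      have hfin : (Z.A (some y) ∩ Z.A none ∩ Z.A (some t)).Finite :=
        Z.A_fin _ _ _ (by simp) (by simp) (fun h => hty (Option.some.inj h).symm)
      have hev := (hl.and (ev_of_finite hfin))
      refine hinf ((eventually_cofinite.1 hev).subset ?_)
      rintro n hn ⟨h1, h2⟩
      have h3 : n ∉ Z.A (some t) := fun h3 => h2 ⟨hn, h3⟩
      exact (h n).1 (h1.trans ((act_dd_eq_c_iff _ _ _).2 h3)) hn.1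

lemma not_dvd_one (t : Z.T) : ¬ Z.N ∣ 1 := by
  intro h
  obtain ⟨n, hnC, hn⟩ := (C_inf t).exists_notMem_finite (eventually_cofinite.1 (Z.hN 1))
  simp only [Set.mem_ofPred_eq, not_not] at hn
  have hI : n ∈ Z.I := Z.A_sub _ hnC.1
  have := (hn hI).2 h
  rw [zpow_one] at this
  exact Z.σ_d n hI this

/-- The key computation for the spoiler. -/
lemma transfer {p y : Z.T} (hp : Z.par y = some p) {l μ : Z.T →₀ ℤ} {u v : ∀ n, Mf n}
    (hu : ∀ᶠ n in cofinite, u n = Z.act (Z.K l) (Z.dd p) n)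
    (hv : ∀ᶠ n in cofinite, v n = Z.act (Z.K μ) (Z.dd y) n)
    (huv : ∀ n, n ∈ Z.C y → u n = v n) (hl : ¬ Z.N ∣ l y) : ¬ Z.N ∣ μ y := by
  intro hμ
  have hev := (((hu.and hv).and (K_on_C l y)).and (K_on_C μ y)).and (Z.hN (l y - μ y))
  obtain ⟨n, hnC, hn⟩ := (C_inf y).exists_notMem_finite (eventually_cofinite.1 hev)
  simp only [Set.mem_ofPred_eq, not_not] at hn
  obtain ⟨⟨⟨⟨h1, h2⟩, h3⟩, h4⟩, h5⟩ := hn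
  have hAy : n ∈ Z.A (some y) := hnC.1
  have hAp : n ∈ Z.A (some p) := hp ▸ hnC.2
  have h6 := huv n hnC
  rw [h1, h2, act_apply_dd, act_apply_dd, if_pos hAy, if_pos hAp, h3 hnC, h4 hnC] at h6
  refine hl ((dvd_sub_left hμ).1 ((h5 (Z.A_sub _ hAy)).1 ?_))
  rw [sub_eq_neg_add, zpow_add, Equiv.Perm.mul_apply, h6, ← Equiv.Perm.mul_apply,
    ← zpow_add]
  simp

end

end CodeSetup
lemma zpow_pres {X : Type} {m : ℕ} (P : (Fin m → X) → Prop) (s : Equiv.Perm X)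
    (h : ∀ x, P (s ∘ x) ↔ P x) (k : ℤ) : ∀ x, P (⇑(s ^ k) ∘ x) ↔ P x := by
  induction k using Int.induction_on with
  | zero => intro x; simp
  | succ i ih =>
    intro x
    have h1 : ⇑(s ^ ((i : ℤ) + 1)) ∘ x = ⇑(s ^ (i : ℤ)) ∘ (s ∘ x) := by
      funext j
      simp [zpow_add]
    rw [h1, ih, h]
  | pred i ih =>
    intro x
    have h1 : ⇑(s ^ (-(i : ℤ) - 1)) ∘ x = ⇑(s ^ (-(i : ℤ))) ∘ (⇑s⁻¹ ∘ x) := by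
      funext j
      simp [zpow_sub]
    rw [h1, ih, ← h]
    have h2 : s ∘ (⇑s⁻¹ ∘ x) = x := by
      funext j
      simp
    rw [h2]

section Game

open ProdStr ScottTools FirstOrder FirstOrder.Language Filter

variable {Rs : ℕ → ℕ → Type} {Mf : ℕ → Type} [∀ n, (relLang (Rs n)).Structure (Mf n)]

/-- The automorphism of the product given by an exponent vector. -/
def actEquiv (Z : CodeSetup Mf)
    (haut : ∀ n m (R : (relLang (Rs n)).Relations m) (x : Fin m → Mf n),
      Structure.RelMap R (Z.σ n ∘ x) ↔ Structure.RelMap R x) (k : ℕ → ℤ) :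
    (∀ n, Mf n) ≃[prodLang Rs] (∀ n, Mf n) where
  toFun := Z.act k
  invFun := Z.act (-k)
  left_inv := CodeSetup.act_neg_act k
  right_inv := CodeSetup.act_act_neg k
  map_fun' := fun f => (f : Empty).elim
  map_rel' := by
    intro m r x
    rcases r with ⟨n, R⟩ | ⟨h, n⟩
    · exact zpow_pres (fun y => Structure.RelMap (L := relLang (Rs n)) (M := Mf n)
        (R : (relLang (Rs n)).Relations m) y) (Z.σ n) (haut n m R) (k n) (fun i => x i n)
    · exact (Z.σ n ^ k n).injective.eq_iff

variable (Z : CodeSetup Mf) (S : (prodLang Rs).ElementarySubstructure (∀ n, Mf n))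

lemma qf_of_act (haut : ∀ n m (R : (relLang (Rs n)).Relations m) (x : Fin m → Mf n),
      Structure.RelMap R (Z.σ n ∘ x) ↔ Structure.RelMap R x) (k : ℕ → ℤ) {m : ℕ}
    (a b : Fin m → S) (h : ∀ i, (b i : ∀ n, Mf n) = Z.act k (a i)) :
    QFEquiv (prodLang Rs) S S a b := by
  intro φ _
  rw [← S.subtype.map_formula φ a, ← S.subtype.map_formula φ b,
    ← StrongHomClass.realize_formula (actEquiv Z haut k) φ]
  have : (actEquiv Z haut k) ∘ (S.subtype ∘ a) = S.subtype ∘ b := by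
    funext i
    exact (h i).symm
  rw [this]

lemma eq_of_qf {m : ℕ} {a b : Fin m → S} (h : QFEquiv (prodLang Rs) S S a b)
    (i j : Fin m) (n : ℕ) :
    (a i : ∀ n, Mf n) n = (a j : ∀ n, Mf n) n ↔ (b i : ∀ n, Mf n) n = (b j : ∀ n, Mf n) n := by
  let E : (prodLang Rs).Relations 2 := Sum.inr (⟨rfl⟩, n)
  let φ : (prodLang Rs).Formula (Fin m) := E.formula ![Term.var i, Term.var j]
  have hφ : φ.IsQF := (BoundedFormula.IsAtomic.rel _ _).isQF
  have key : ∀ a : Fin m → S, φ.Realize a ↔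
      (a i : ∀ n, Mf n) n = (a j : ∀ n, Mf n) n := by
    intro a
    rw [← S.subtype.map_formula φ a, Formula.realize_rel]
    exact Iff.rfl
  rw [← key, ← key]
  exact h φ hφ

lemma duplicator (hS : ∀ x, x ∈ S ↔ x ∈ Z.univ)
    (haut : ∀ n m (R : (relLang (Rs n)).Relations m) (x : Fin m → Mf n),
      Structure.RelMap R (Z.σ n ∘ x) ↔ Structure.RelMap R x) (β : Ordinal.{0}) :
    ∀ (m : ℕ) (a b : Fin m → S) (F : Finset Z.T) (κ : Z.T →₀ ℤ) (k : ℕ → ℤ),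
      Z.Pos β (fun i => (a i : ∀ n, Mf n)) (fun i => (b i : ∀ n, Mf n)) F κ k →
      BFEquiv (prodLang Rs) S S β m a b := by
  induction β using Ordinal.induction with
  | _ β ih =>
  intro m a b F κ k H
  rw [bf_iff]
  have hsn : ∀ (a : Fin m → S) (x : S), (fun i => ((Fin.snoc (α := fun _ => S) a x :
      Fin (m + 1) → S) i : ∀ n, Mf n)) =
      Fin.snoc (α := fun _ => ∀ n, Mf n) (fun i => (a i : ∀ n, Mf n)) (x : ∀ n, Mf n) := by
    intro a x
    funext i
    refine Fin.lastCases ?_ (fun j => ?_) i <;> simp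
  refine ⟨qf_of_act Z S haut k a b H.hab, fun γ hγ => ⟨fun x => ?_, fun y => ?_⟩⟩
  · obtain ⟨F', κ', k', H', hx⟩ := H.step hγ x ((hS _).1 x.2)
    refine ⟨⟨Z.act k' x, (hS _).2 (CodeSetup.mem_of_good (H'.act_good hx))⟩, ?_⟩
    refine ih γ hγ _ _ _ F' κ' k' ?_
    rw [hsn, hsn]
    exact H'.snoc _ _ hx rfl
  · obtain ⟨F', κ', k', H', hy⟩ := H.step hγ y ((hS _).1 y.2)
    have hx := H'.act_neg_good hy
    refine ⟨⟨Z.act (-k') y, (hS _).2 (CodeSetup.mem_of_good hx)⟩, ?_⟩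
    refine ih γ hγ _ _ _ F' κ' k' ?_
    rw [hsn, hsn]
    exact H'.snoc _ _ hx (CodeSetup.act_act_neg _ _).symm

lemma spoiler (hS : ∀ x, x ∈ S ↔ x ∈ Z.univ) (o : Ordinal.{0}) :
    ∀ (y p : Z.T), Z.rho y = o → Z.par y = some p →
    ∀ (m : ℕ) (a b : Fin m → S), BFEquivInf (prodLang Rs) S S m a b →
    ∀ (i₀ i₁ : Fin m) (l : Z.T →₀ ℤ), (a i₀ : ∀ n, Mf n) = Z.c → (b i₀ : ∀ n, Mf n) = Z.c →
      (a i₁ : ∀ n, Mf n) = Z.dd p →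
      (∀ᶠ n in cofinite, (b i₁ : ∀ n, Mf n) n = Z.act (Z.K l) (Z.dd p) n) →
      ¬ Z.N ∣ l y → False := by
  induction o using Ordinal.induction with
  | _ o ih =>
  intro y p hyo hyp m a b H i₀ i₁ l ha0 hb0 ha1 hb1 hl
  obtain ⟨x, hx⟩ := bfInf_step H ⟨Z.dd y, (hS _).2 (CodeSetup.dd_mem y)⟩
  have hqf := ((bf_iff _ _ _ _).1 (hx 0)).1
  have e0 : ∀ n, (x : ∀ n, Mf n) n = Z.c n ↔ n ∉ Z.A (some y) := by
    intro n
    have h1 := eq_of_qf S hqf (Fin.last m) i₀.castSucc n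
    simp only [Fin.snoc_last, Fin.snoc_castSucc] at h1
    rw [ha0, hb0] at h1
    rw [← h1, ← CodeSetup.act_dd_eq_c_iff 0 y n, CodeSetup.act_zero]
  obtain ⟨μ, hμ0, hμ⟩ := CodeSetup.Ty_of_support ((hS _).1 x.2) e0
  have e1 : ∀ n, n ∈ Z.C y → (b i₁ : ∀ n, Mf n) n = (x : ∀ n, Mf n) n := by
    intro n hn
    have h1 := eq_of_qf S hqf i₁.castSucc (Fin.last m) n
    simp only [Fin.snoc_last, Fin.snoc_castSucc] at h1
    rw [ha1] at h1
    refine h1.1 ?_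
    have hAp : n ∈ Z.A (some p) := hyp ▸ hn.2
    simp only [CodeSetup.dd]
    rw [if_pos hAp, if_pos hn.1]
  have hnd := CodeSetup.transfer hyp hb1 hμ e1 hl
  obtain ⟨z, hzy, hz⟩ := CodeSetup.exists_child y μ hμ0 hnd
  refine ih (Z.rho z) (hyo ▸ Z.rho_lt _ _ hzy) z y rfl hzy _ _ _ hx i₀.castSucc (Fin.last m) μ
    ?_ ?_ ?_ ?_ hz
  · simpa using ha0
  · simpa using hb0
  · simp
  · simpa using hμ

lemma scottRank_ge (hS : ∀ x, x ∈ S ↔ x ∈ Z.univ)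
    (haut : ∀ n m (R : (relLang (Rs n)).Relations m) (x : Fin m → Mf n),
      Structure.RelMap R (Z.σ n ∘ x) ↔ Structure.RelMap R x) (r : Z.T)
    (hr : Z.par r = none) : Z.rho r ≤ ScottRank (prodLang Rs) S := by
  classical
  refine le_scottRank _ fun β hβ => ?_
  obtain ⟨z, -, hzr, hz⟩ := Z.fresh r β hβ ∅
  have hne : z ≠ r := fun h => by simp [h, hr] at hzr
  let κ : Z.T →₀ ℤ := Finsupp.single r 1 - Finsupp.single z 1
  have hκz : κ z = -1 := by simp [κ, hne]
  have hκ : ∀ y, κ y ≠ 0 → y = r ∨ y = z := by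
    intro y hy
    by_contra hcon
    push Not at hcon
    simp [κ, Finsupp.single_apply, hcon.1.symm, hcon.2.symm] at hy
  have hD : Z.D r κ = 0 := by
    simp [κ, CodeSetup.D_single, hne, hr, hzr]
  have hty : Z.Ty r (Z.act (Z.K κ) (Z.dd r)) := ⟨κ, hD, Eventually.of_forall fun _ => rfl⟩
  let c' : S := ⟨Z.c, (hS _).2 CodeSetup.c_mem⟩
  let d' : S := ⟨Z.dd r, (hS _).2 (CodeSetup.dd_mem r)⟩
  let e' : S := ⟨Z.act (Z.K κ) (Z.dd r), (hS _).2 (Or.inr ⟨r, hty⟩)⟩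
  refine ⟨2, ![c', d'], ![c', e'], ?_, ?_⟩
  · refine duplicator Z S hS haut β 2 _ _ {r} κ (Z.K κ) ⟨?_, ?_, ?_, ?_, ?_, ?_⟩
    · exact Eventually.of_forall fun _ => rfl
    · intro i
      fin_cases i
      · funext n
        exact (CodeSetup.zpow_c n _).symm
      · rfl
    · intro i
      fin_cases i
      · exact Or.inl (Eventually.of_forall fun _ => rfl)
      · exact Or.inr ⟨r, Finset.mem_singleton_self r, CodeSetup.dd_Ty r⟩
    · intro t ht
      rw [Finset.mem_singleton.1 ht, hD]
    · intro y p hy hp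
      rcases hκ y hy with rfl | rfl
      · simp [hr] at hp
      · rw [hzr] at hp
        simp [Option.some.inj hp]
    · intro y hyF hy
      rcases hκ y hy with rfl | rfl
      · simp at hyF
      · exact hz
  · intro H
    refine spoiler Z S hS (Z.rho z) z r rfl hzr 2 _ _ H 0 1 κ rfl rfl rfl
      (Eventually.of_forall fun _ => rfl) ?_
    rw [hκz]
    simpa using CodeSetup.not_dvd_one r

lemma exists_autos [∀ n, Fintype (Mf n)] (hcard : ∀ n, 2 ≤ Fintype.card (Mf n)) :
    ∃ (σ : ∀ n, Equiv.Perm (Mf n)) (c d : ∀ n, Mf n),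
      (∀ n m (R : (relLang (Rs n)).Relations m) (x : Fin m → Mf n),
        Structure.RelMap R (σ n ∘ x) ↔ Structure.RelMap R x) ∧
      (∀ n, σ n (c n) = c n) ∧ (∀ n, ¬ FreeAut Rs Mf n → σ n (d n) ≠ d n) := by
  have : ∀ n, ∃ (σ : Equiv.Perm (Mf n)) (c d : Mf n),
      (∀ m (R : (relLang (Rs n)).Relations m) (x : Fin m → Mf n),
        Structure.RelMap R (σ ∘ x) ↔ Structure.RelMap R x) ∧
      σ c = c ∧ (¬ FreeAut Rs Mf n → σ d ≠ d) := by
    intro n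
    by_cases h : FreeAut Rs Mf n
    · have : Nonempty (Mf n) := Fintype.card_pos_iff.1 (lt_of_lt_of_le two_pos (hcard n))
      obtain ⟨c⟩ := this
      exact ⟨1, c, c, fun m R x => Iff.rfl, rfl, fun h' => absurd h h'⟩
    · have h' := h
      unfold FreeAut at h'
      push Not at h'
      obtain ⟨σ, c, hc, d, hd⟩ := h'
      exact ⟨σ.toEquiv, c, d, fun m R x => σ.map_rel' R x, hc, fun _ => hd⟩
  choose σ c d h1 h2 h3 using this
  exact ⟨σ, c, d, h1, h2, h3⟩

end Game

/-- If `M̄ ∈ 𝕄` and the action of `Aut(Mₙ)` on `Mₙ` fails to be free for infinitely many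
`n`, then for every ordinal `α < (2^ℵ₀)⁺` there is an elementary substructure of
`∏ₙ Mₙ` of Scott rank at least `α`. -/
theorem unbounded_scottRank_of_infinitely_nonfree (Rs : ℕ → ℕ → Type) (Mf : ℕ → Type)
    [∀ n, (relLang (Rs n)).Structure (Mf n)] [∀ n, Fintype (Mf n)]
    (hcard : ∀ n, 2 ≤ Fintype.card (Mf n))
    (hnonfree : {n : ℕ | ¬ FreeAut Rs Mf n}.Infinite)
    (α : Ordinal.{0}) (hα : α < (Order.succ (2 ^ Cardinal.aleph0 : Cardinal.{0})).ord) :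
    ∃ S : (prodLang Rs).ElementarySubstructure (∀ n, Mf n),
      α ≤ ScottRank (prodLang Rs) S := by
  classical
  obtain ⟨σ, c, d, h1, h2, h3⟩ := exists_autos (Rs := Rs) (Mf := Mf) hcard
  obtain ⟨T, par, rho, r, hT, hlt, hfresh, hr, hpr⟩ := exists_tree α hα
  obtain ⟨J, N, hJI, hJ, hN⟩ := exists_period
    (fun n => Function.minimalPeriod (fun x => σ n • x) (d n)) _ hnonfree
  obtain ⟨A, hA1, hA2, hA3⟩ := exists_sets (Option T) hT J hJ
  let Z : CodeSetup Mf :=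
    { T := T, par := par, rho := rho, rho_lt := hlt, fresh := hfresh, I := J, A := A,
      A_sub := hA1, A_inf := hA2, A_fin := hA3, σ := σ, c := c, d := d, N := N, σ_c := h2,
      σ_d := fun n hn => h3 n (hJI hn),
      hN := fun k => by
        filter_upwards [hN k] with n hn hnJ
        rw [← hn hnJ, ← MulAction.zpow_smul_eq_iff_minimalPeriod_dvd]
        rfl }
  obtain ⟨S, hS⟩ := exists_elementary (Rs := Rs) hcard Z.univ c (fun x hx => Or.inl hx)
  exact ⟨S, hr ▸ scottRank_ge Z S hS h1 r hpr⟩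
end

section
/- Let (P, ≤, δ) ∈ ℙ be nearly binary crosscutting, i.e., there is a finite downward-closed Q ⊆ P such that P∖Q is an antichain on which δ is identically 2. Then every model M of T_P with the property that any two elements of M that are E_p-equivalent for every p ∈ P are equal admits a finite base. -/
open FirstOrder

universe u v w

namespace PP

open FirstOrder

/-- The language `ℒ_P`: one binary relation symbol `E_p` for each `p : P`. -/
def LP (P : Type u) : FirstOrder.Language :=
  ⟨fun _ => Empty, fun k => PLift (k = 2) × P⟩

/-- The interpretation of the relation symbol `E_p`. -/
def Rel {P : Type u} {M : Type w} [(LP P).Structure M] (p : P) (a b : M) : Prop :=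
  Language.Structure.RelMap (L := LP P) (M := M) (n := 2) (⟨⟨rfl⟩, p⟩ : PLift (2 = 2) × P) ![a, b]

/-- `M` satisfies the axioms of `T_P` (with respect to the order `le` on `P` and the
splitting function `δ`): each `E_q` is an equivalence relation; `E_q` refines `E_{q'}` for
`q' ≤ q` and partitions each `E_{<q}`-class into exactly `δ q` classes; and coherent
sequences indexed by finite downward-closed sets have common refinements. -/
def ModelsTP {P : Type u} (le : P → P → Prop) (δ : P → ℕ) (M : Type w)
    [(LP P).Structure M] : Prop :=
  (∀ p : P, Equivalence (fun a b : M => Rel p a b)) ∧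
  (∀ p q : P, le p q → ∀ a b : M, Rel q a b → Rel p a b) ∧
  (∀ (q : P) (a : M), ∃ f : Fin (δ q) → M,
      (∀ (i : Fin (δ q)) (p : P), le p q → p ≠ q → Rel p (f i) a) ∧
      (∀ i j : Fin (δ q), i ≠ j → ¬ Rel q (f i) (f j)) ∧
      (∀ b : M, (∀ p : P, le p q → p ≠ q → Rel p b a) → ∃ i, Rel q b (f i))) ∧
  (∀ Q : Finset P, (∀ p q : P, le p q → q ∈ Q → p ∈ Q) →
      ∀ a : P → M, (∀ p q : P, p ∈ Q → q ∈ Q → le p q → Rel p (a p) (a q)) →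
      ∃ z : M, ∀ q ∈ Q, Rel q z (a q))

end PP

open ScottTools PP

/-- Finitely many equivalence relations, each with a finite set of representatives,
have a common finite set of representatives. -/
lemma exists_finite_common_reps {P : Type u} {M : Type w} (R : P → M → M → Prop)
    (hR : ∀ p, Equivalence (R p)) (S : Set P) (hS : S.Finite)
    (h : ∀ p ∈ S, ∃ B : Set M, B.Finite ∧ ∀ a, ∃ c ∈ B, R p a c) :
    ∃ B : Set M, B.Finite ∧ ∀ a, ∃ c ∈ B, ∀ p ∈ S, R p a c := by
  classical
  choose! B hB g hg hr using h
  have := hS.to_subtype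
  have (s : S) : Finite (B s.1) := (hB s.1 s.2).to_subtype
  let f : M → (∀ s : S, B s.1) := fun a s => ⟨g s.1 a, hg s.1 s.2 a⟩
  refine ⟨Set.range (Set.rangeSplitting f), Set.finite_range _, fun a => ?_⟩
  refine ⟨_, ⟨⟨f a, a, rfl⟩, rfl⟩, fun p hp => ?_⟩
  have h1 := Set.apply_rangeSplitting f ⟨f a, a, rfl⟩
  have h2 := congrArg Subtype.val (congrFun h1 ⟨p, hp⟩)
  have h3 := hr p hp (Set.rangeSplitting f ⟨f a, a, rfl⟩)
  simp only [f] at h2 h3 ⊢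
  rw [h2] at h3
  exact (hR p).trans (hr p hp a) ((hR p).symm h3)

theorem finite_base_of_nearly_binary_crosscutting
    {P : Type u} [PartialOrder P] [Countable P]
    (hdf : ∀ p : P, (Set.Iic p).Finite)
    (δ : P → ℕ) (hδ : ∀ p, 2 ≤ δ p)
    (Q : Finset P) (hQdc : ∀ p q : P, p ≤ q → q ∈ Q → p ∈ Q)
    (hQanti : ∀ p q : P, p ∉ Q → q ∉ Q → p ≠ q → ¬ p < q)
    (hQδ : ∀ p : P, p ∉ Q → δ p = 2)
    (M : Type w) [(LP P).Structure M]
    (hM : ModelsTP (· ≤ · : P → P → Prop) δ M)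
    (hsep : ∀ a b : M, (∀ p : P, Rel p a b) → a = b) :
    ∃ B : Set M, B.Finite ∧ IsBase (LP P) M B := by
  obtain ⟨heq, href, hsplit, -⟩ := hM
  have hfin : ∀ n : ℕ, ∀ q : P, (Set.Iic q).ncard = n →
      ∃ B : Set M, B.Finite ∧ ∀ a, ∃ c ∈ B, Rel q a c := by
    intro n
    induction n using Nat.strong_induction_on with
    | _ n ih =>
      intro q hq
      obtain ⟨B, hB, hBr⟩ := exists_finite_common_reps (fun p (a b : M) => Rel p a b) heq
        (Set.Iio q) ((hdf q).subset Set.Iio_subset_Iic_self) (fun p hp => by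
          refine ih _ ?_ p rfl
          rw [← hq]
          exact Set.ncard_lt_ncard (Set.Iic_ssubset_Iic.2 hp) (hdf q))
      choose f hf1 hf2 hf3 using hsplit q
      refine ⟨⋃ c ∈ B, Set.range (f c), hB.biUnion fun c _ => Set.finite_range _, fun a => ?_⟩
      obtain ⟨c, hc, hac⟩ := hBr a
      obtain ⟨i, hi⟩ := hf3 c a (fun p h1 h2 => hac p (lt_of_le_of_ne h1 h2))
      exact ⟨f c i, Set.mem_biUnion hc ⟨i, rfl⟩, hi⟩
  obtain ⟨B, hB, hBr⟩ := exists_finite_common_reps (fun p (a b : M) => Rel p a b) heq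
    (Q : Set P) Q.finite_toSet (fun p _ => hfin _ p rfl)
  refine ⟨B, hB, fun a b hab => hsep a b ?_⟩
  obtain ⟨c, hc, hac⟩ := hBr a
  have key : ∀ p : P, Rel p c a ↔ Rel p c b := by
    intro p
    let R : (LP P).Relations 2 := (⟨⟨rfl⟩, p⟩ : PLift (2 = 2) × P)
    have h := hab 1 (fun _ => c) (fun _ => hc)
      (Language.Relations.formula₂ R (Language.Term.var 0) (Language.Term.var 1))
    have hr : ∀ x : M, (Language.Relations.formula₂ R (Language.Term.var 0)
        (Language.Term.var 1)).Realize (Fin.snoc (fun _ => c) x : Fin (1 + 1) → M) ↔ Rel p c x :=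
      fun x => Language.Formula.realize_rel₂
    exact (hr a).symm.trans (h.trans (hr b))
  have hca : ∀ p ∈ Q, Rel p c a := fun p hp => (heq p).symm (hac p hp)
  intro p
  by_cases hpa : Rel p c a
  · exact (heq p).trans ((heq p).symm hpa) ((key p).1 hpa)
  have hpb : ¬ Rel p c b := fun h => hpa ((key p).2 h)
  have hpQ : p ∉ Q := fun h => hpa (hca p h)
  have hlt : ∀ r : P, r ≤ p → r ≠ p → r ∈ Q := by
    intro r h1 h2
    by_contra h3
    exact hQanti r p h3 hpQ h2 (lt_of_le_of_ne h1 h2)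
  obtain ⟨f, -, -, hf⟩ := hsplit p c
  obtain ⟨i, hi⟩ := hf a (fun r h1 h2 => (heq r).symm (hca r (hlt r h1 h2)))
  obtain ⟨j, hj⟩ := hf b (fun r h1 h2 => (heq r).symm ((key r).1 (hca r (hlt r h1 h2))))
  obtain ⟨k, hk⟩ := hf c (fun r _ _ => (heq r).refl c)
  have hki : k ≠ i := fun h => hpa ((heq p).trans hk ((heq p).symm (h ▸ hi)))
  have hkj : k ≠ j := fun h => hpb ((heq p).trans hk ((heq p).symm (h ▸ hj)))
  have hij : i = j := by
    have := hQδ p hpQ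
    have := k.2
    have := i.2
    have := j.2
    have := Fin.val_ne_of_ne hki
    have := Fin.val_ne_of_ne hkj
    apply Fin.ext
    omega
  subst hij
  exact (heq p).trans hi ((heq p).symm hj)
end

section
/- Let C ∈ 𝐂 and let A ⊆ C be a finite nonempty coherent set. Then rnk^C(A) = min{ rnk^C({(f,g)}) : (f,g) ∈ A } (with the convention that the minimum is ∞ if every term is ∞). -/
namespace G2sys

/-- The Cantor group `2^ω` with coordinatewise addition mod 2. -/
abbrev G2 : Type := ℕ → ZMod 2

/-- `C ∈ 𝐂`: every vertical fiber `C[f]` is a coset of a subgroup of `2^ω`. -/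
def InC (C : Set (G2 × G2)) : Prop :=
  ∀ f : G2, ∃ (H : AddSubgroup G2) (g₀ : G2),
    {g : G2 | (f, g) ∈ C} = (fun h => g₀ + h) '' (H : Set G2)

/-- `A ⊆ 2^ω × 2^ω` is coherent if whenever two of its members agree on the first
coordinate up to `n`, they also agree on the second coordinate up to `n`. -/
def Coherent (A : Set (G2 × G2)) : Prop :=
  ∀ p ∈ A, ∀ q ∈ A, ∀ n : ℕ, (∀ m < n, p.1 m = q.1 m) → ∀ m < n, p.2 m = q.2 m

/-- `rnkGE C α A`: the rank of the coherent set `A ⊆ C` is at least `α`. -/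
def rnkGE (C : Set (G2 × G2)) : Ordinal.{0} → Set (G2 × G2) → Prop
  | α, A => ∀ β : Ordinal.{0}, β < α → ∀ f : G2, ∃ g : G2,
      insert (f, g) A ⊆ C ∧ Coherent (insert (f, g) A) ∧ rnkGE C β (insert (f, g) A)
  termination_by α => α

end G2sys

open G2sys

theorem G2sys.rnkGE_anti (C : Set (G2 × G2)) (α : Ordinal.{0}) :
    ∀ A B : Set (G2 × G2), A ⊆ B → rnkGE C α B → rnkGE C α A := by
  induction α using WellFoundedLT.induction with
  | ind α ih =>
    intro A B hAB hB
    rw [rnkGE] at hB ⊢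
    intro β hβ f
    obtain ⟨g, h1, h2, h3⟩ := hB β hβ f
    have hs : insert (f, g) A ⊆ insert (f, g) B := Set.insert_subset_insert hAB
    exact ⟨g, hs.trans h1, fun p hp q hq => h2 p (hs hp) q (hs hq), ih β hβ _ _ hs h3⟩

theorem G2sys.rnkGE_mono (C : Set (G2 × G2)) (α β : Ordinal.{0}) (h : β ≤ α)
    (A : Set (G2 × G2)) (hA : rnkGE C α A) : rnkGE C β A := by
  rw [rnkGE] at hA ⊢
  exact fun γ hγ => hA γ (hγ.trans_le h)

/-- Some member of a finite nonempty set has the longest agreement with `f`. -/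
theorem G2sys.exists_closest (f : G2) (A : Set (G2 × G2)) (hfin : A.Finite) :
    A.Nonempty → ∃ x ∈ A, ∀ y ∈ A, ∀ n : ℕ, (∀ m < n, f m = y.1 m) → ∀ m < n, f m = x.1 m := by
  induction A, hfin using Set.Finite.induction_on with
  | empty => intro h; exact absurd h (by simp)
  | @insert a s _ _ ih =>
    intro _
    rcases s.eq_empty_or_nonempty with rfl | hs
    · refine ⟨a, by simp, ?_⟩
      intro y hy n h
      have : y = a := by simpa using hy
      subst this
      exact h
    · obtain ⟨x, hx, hmax⟩ := ih hs
      by_cases hax : ∀ n : ℕ, (∀ m < n, f m = a.1 m) → ∀ m < n, f m = x.1 m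
      · refine ⟨x, Or.inr hx, ?_⟩
        rintro y (rfl | hy)
        · exact hax
        · exact hmax y hy
      · push Not at hax
        obtain ⟨n, hn, m, hm, hne⟩ := hax
        refine ⟨a, Or.inl rfl, ?_⟩
        rintro y (rfl | hy) k hk
        · exact hk
        · have hkx := hmax y hy k hk
          intro i hi
          have : k ≤ m := by
            by_contra hlt
            exact hne (hkx m (by omega))
          exact hn i (by omega)

/-- For `C ∈ 𝐂` and a finite nonempty coherent `A ⊆ C`, the rank of `A` is the minimum of
the ranks of its singletons: for every ordinal `α`, `rnk(A) ≥ α` iff `rnk({x}) ≥ α` for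
every `x ∈ A`. -/
theorem rnk_finite_coherent_eq_min (C : Set (G2 × G2)) (hC : InC C)
    (A : Set (G2 × G2)) (hAC : A ⊆ C) (hfin : A.Finite) (hne : A.Nonempty)
    (hcoh : Coherent A) :
    ∀ α : Ordinal.{0}, rnkGE C α A ↔ ∀ x ∈ A, rnkGE C α {x} := by
  intro α
  refine ⟨fun h x hx => rnkGE_anti C α _ _ (by simpa using hx) h, ?_⟩
  induction α using WellFoundedLT.induction generalizing A with
  | ind α ih =>
    intro h
    rw [rnkGE]
    intro β hβ f
    obtain ⟨x, hx, hmax⟩ := exists_closest f A hfin hne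
    have hxr := h x hx
    rw [rnkGE] at hxr
    obtain ⟨g, h1, h2, h3⟩ := hxr β hβ f
    have hsub : insert (f, g) A ⊆ C := Set.insert_subset (h1 (by simp)) hAC
    have key : ∀ y ∈ A, ∀ n : ℕ, (∀ m < n, f m = y.1 m) → ∀ m < n, g m = y.2 m := by
      intro y hy n hn m hm
      have hfx := hmax y hy n hn
      have e1 : g m = x.2 m := h2 (f, g) (by simp) x (by simp) n hfx m hm
      have e2 : x.2 m = y.2 m :=
        hcoh x hx y hy n (fun i hi => (hfx i hi).symm.trans (hn i hi)) m hm
      exact e1.trans e2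
    have hco : Coherent (insert (f, g) A) := by
      rintro p (rfl | hp) q (rfl | hq) n hn m hm
      · rfl
      · exact key q hq n hn m hm
      · exact (key p hp n (fun i hi => (hn i hi).symm) m hm).symm
      · exact hcoh p hp q hq n hn m hm
    refine ⟨g, hsub, hco, ih β hβ _ hsub (hfin.insert _) (Set.insert_nonempty _ _) hco ?_⟩
    rintro y (rfl | hy)
    · exact rnkGE_anti C β _ _ (by simp) h3
    · exact rnkGE_mono C α β hβ.le _ (h y hy)
end

section
/- Let C ∈ 𝐂 and define G ∈ 𝐂 by letting G[f] be the subgroup of 2^ω of which C[f] is a coset, for each f ∈ 2^ω. Let α be an ordinal. If rnk^C(∅) ≥ α, then (𝔐, C) ≡_α (𝔐, G), where (𝔐, C) denotes the expansion of 𝔐 by a unary predicate interpreted as C. Moreover, if rnk^C(∅) < ∞, then (𝔐, C) ≢_∞ (𝔐, G). -/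
open FirstOrder

universe u v w

open G2sys ScottTools

namespace G2sys

/-- The language of `𝔐`: binary relations `E_{p_n}` (left) and `E_{q_n}` (right),
together with one extra unary predicate. -/
def L316 : FirstOrder.Language :=
  ⟨fun _ => Empty, fun k => PLift (k = 1) × Unit ⊕ PLift (k = 2) × (ℕ ⊕ ℕ)⟩

/-- The structure `(𝔐, X)`: universe `2^ω × 2^ω`, relations
`(f,g) E_{p_n} (f',g')` iff `f n = f' n`, `(f,g) E_{q_n} (f',g')` iff `f↾(n+1) = f'↾(n+1)`
and `g n = g' n`, and the unary predicate interpreted by `X`. -/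
def MStruct (X : Set (G2 × G2)) : L316.Structure (G2 × G2) where
  funMap := fun f _ => f.elim
  RelMap := fun {k} r x =>
    match r with
    | Sum.inl ⟨h, _⟩ => x (Fin.cast h.down.symm 0) ∈ X
    | Sum.inr ⟨h, Sum.inl n⟩ =>
        (x (Fin.cast h.down.symm 0)).1 n = (x (Fin.cast h.down.symm 1)).1 n
    | Sum.inr ⟨h, Sum.inr n⟩ =>
        (∀ m ≤ n, (x (Fin.cast h.down.symm 0)).1 m = (x (Fin.cast h.down.symm 1)).1 m) ∧
        (x (Fin.cast h.down.symm 0)).2 n = (x (Fin.cast h.down.symm 1)).2 n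

end G2sys

namespace G2sys

lemma g2_add_self (x : G2) : x + x = 0 := by
  funext n
  exact CharTwo.add_self_eq_zero (x n)

/-- Elementwise description of equality of quantifier-free types. -/
structure Match (C G : Set (G2 × G2)) {n : ℕ} (a b : Fin n → G2 × G2) : Prop where
  eq : ∀ i j, a i = a j ↔ b i = b j
  mem : ∀ i, a i ∈ C ↔ b i ∈ G
  left : ∀ i j m, (a i).1 m = (a j).1 m ↔ (b i).1 m = (b j).1 m
  right : ∀ i j m, ((∀ k ≤ m, (a i).1 k = (a j).1 k) ∧ (a i).2 m = (a j).2 m) ↔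
    ((∀ k ≤ m, (b i).1 k = (b j).1 k) ∧ (b i).2 m = (b j).2 m)

lemma term_var {n : ℕ} (t : L316.Term (Fin n ⊕ Fin 0)) :
    ∃ i : Fin n, t = FirstOrder.Language.Term.var (Sum.inl i) := by
  cases t with
  | var x =>
    rcases x with i | i
    · exact ⟨i, rfl⟩
    · exact i.elim0
  | func f _ => exact Empty.elim f

lemma qf_of_match (C G : Set (G2 × G2)) {n : ℕ} (a b : Fin n → G2 × G2) (h : Match C G a b) :
    @QFEquiv L316 (G2 × G2) (G2 × G2) (MStruct C) (MStruct G) n a b := by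
  intro φ hφ
  unfold FirstOrder.Language.Formula.Realize
  generalize (default : Fin 0 → G2 × G2) = d
  induction hφ with
  | falsum => exact Iff.rfl
  | of_isAtomic hat =>
    cases hat with
    | equal t₁ t₂ =>
      obtain ⟨i, rfl⟩ := term_var t₁
      obtain ⟨j, rfl⟩ := term_var t₂
      exact h.eq i j
    | rel R ts =>
      choose f hf using fun k => term_var (ts k)
      obtain rfl : ts = fun k => FirstOrder.Language.Term.var (Sum.inl (f k)) := funext hf
      rcases R with ⟨⟨rfl⟩, _⟩ | ⟨⟨rfl⟩, m | m⟩
      · exact h.mem (f 0)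
      · exact h.left (f 0) (f 1) m
      · exact h.right (f 0) (f 1) m
  | imp _ _ ih₁ ih₂ => exact imp_congr ih₁ ih₂

lemma match_of_qf (C G : Set (G2 × G2)) {n : ℕ} (a b : Fin n → G2 × G2)
    (h : @QFEquiv L316 (G2 × G2) (G2 × G2) (MStruct C) (MStruct G) n a b) : Match C G a b := by
  refine ⟨fun i j => ?_, fun i => ?_, fun i j m => ?_, fun i j m => ?_⟩
  · exact h (FirstOrder.Language.BoundedFormula.equal (.var (Sum.inl i)) (.var (Sum.inl j)))
      (.of_isAtomic (.equal _ _))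
  · exact h (FirstOrder.Language.BoundedFormula.rel (l := 1) (L := L316)
      (Sum.inl ⟨⟨rfl⟩, ()⟩) (fun _ => .var (Sum.inl i)))
      (.of_isAtomic (.rel _ _))
  · exact h (FirstOrder.Language.BoundedFormula.rel (l := 2) (L := L316)
      (Sum.inr ⟨⟨rfl⟩, Sum.inl m⟩) ![.var (Sum.inl i), .var (Sum.inl j)])
      (.of_isAtomic (.rel _ _))
  · exact h (FirstOrder.Language.BoundedFormula.rel (l := 2) (L := L316)
      (Sum.inr ⟨⟨rfl⟩, Sum.inr m⟩) ![.var (Sum.inl i), .var (Sum.inl j)])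
      (.of_isAtomic (.rel _ _))

lemma mem_shift (C G : Set (G2 × G2))
    (hG : ∀ f : G2, ∃ H : AddSubgroup G2, {g : G2 | (f, g) ∈ G} = (H : Set G2) ∧
      ∃ g₀ : G2, {g : G2 | (f, g) ∈ C} = (fun h => g₀ + h) '' (H : Set G2))
    (f g h : G2) (hh : (f, h) ∈ C) : (f, g) ∈ C ↔ (f, g + h) ∈ G := by
  obtain ⟨H, hH, g₀, hg₀⟩ := hG f
  have e1 : ∀ g, (f, g) ∈ G ↔ g ∈ H := fun g => Set.ext_iff.1 hH g
  have e2 : ∀ g, (f, g) ∈ C ↔ ∃ k ∈ H, g₀ + k = g := fun g => Set.ext_iff.1 hg₀ g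
  obtain ⟨k, hk, rfl⟩ := (e2 h).1 hh
  rw [e1, e2]
  have h0 := g2_add_self g₀
  constructor
  · rintro ⟨l, hl, rfl⟩
    have : g₀ + l + (g₀ + k) = l + k := by
      rw [add_add_add_comm, h0, zero_add]
    rw [this]
    exact H.add_mem hl hk
  · intro hg
    refine ⟨g + (g₀ + k) - k, H.sub_mem hg hk, ?_⟩
    calc g₀ + (g + (g₀ + k) - k) = g + (g₀ + g₀) := by abel
      _ = g := by rw [h0, add_zero]

lemma match_of_coherent (C G : Set (G2 × G2))
    (hG : ∀ f : G2, ∃ H : AddSubgroup G2, {g : G2 | (f, g) ∈ G} = (H : Set G2) ∧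
      ∃ g₀ : G2, {g : G2 | (f, g) ∈ C} = (fun h => g₀ + h) '' (H : Set G2))
    {n : ℕ} (a b : Fin n → G2 × G2) (A : Set (G2 × G2)) (hA : Coherent A) (hAC : A ⊆ C)
    (h : ∀ i, ∃ k : G2, ((a i).1, k) ∈ A ∧ b i = ((a i).1, (a i).2 + k)) : Match C G a b := by
  choose k hk hb using h
  have hr : ∀ i j m, (∀ l ≤ m, (a i).1 l = (a j).1 l) → k i m = k j m := fun i j m hl =>
    hA _ (hk i) _ (hk j) (m + 1) (fun l hl' => hl l (Nat.lt_succ_iff.1 hl')) m (Nat.lt_succ_self m)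
  refine ⟨fun i j => ?_, fun i => ?_, fun i j m => ?_, fun i j m => ?_⟩
  · rw [hb, hb, Prod.ext_iff, Prod.ext_iff]
    refine and_congr_right fun e => ?_
    have : k i = k j := funext fun m => hr i j m (fun l _ => by rw [e])
    simp [this]
  · rw [hb]
    exact mem_shift C G hG _ _ _ (hAC (hk i))
  · rw [hb, hb]
  · rw [hb, hb]
    refine and_congr_right fun e => ?_
    simp [hr i j m e]

lemma bf_of_rank (C G : Set (G2 × G2))
    (hG : ∀ f : G2, ∃ H : AddSubgroup G2, {g : G2 | (f, g) ∈ G} = (H : Set G2) ∧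
      ∃ g₀ : G2, {g : G2 | (f, g) ∈ C} = (fun h => g₀ + h) '' (H : Set G2))
    (α : Ordinal.{0}) : ∀ (n : ℕ) (a b : Fin n → G2 × G2) (A : Set (G2 × G2)),
    Coherent A → A ⊆ C → rnkGE C α A →
    (∀ i, ∃ k : G2, ((a i).1, k) ∈ A ∧ b i = ((a i).1, (a i).2 + k)) →
    @BFEquiv L316 (G2 × G2) (G2 × G2) (MStruct C) (MStruct G) α n a b := by
  induction α using WellFoundedLT.induction with
  | ind α ih =>
    intro n a b A hA hAC hr h
    rw [BFEquiv]
    refine ⟨qf_of_match C G a b (match_of_coherent C G hG a b A hA hAC h), fun β hβ => ?_⟩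
    rw [rnkGE] at hr
    constructor
    · rintro ⟨f, g⟩
      obtain ⟨k, h1, h2, h3⟩ := hr β hβ f
      refine ⟨(f, g + k), ih β hβ _ _ _ _ h2 h1 h3 fun i => ?_⟩
      refine Fin.lastCases ?_ (fun i => ?_) i
      · exact ⟨k, by simp, by simp⟩
      · obtain ⟨l, hl, hl'⟩ := h i
        exact ⟨l, by simp [hl], by simp [hl']⟩
    · rintro ⟨f, g⟩
      obtain ⟨k, h1, h2, h3⟩ := hr β hβ f
      refine ⟨(f, g + k), ih β hβ _ _ _ _ h2 h1 h3 fun i => ?_⟩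
      refine Fin.lastCases ?_ (fun i => ?_) i
      · exact ⟨k, by simp, by simp [add_assoc, g2_add_self]⟩
      · obtain ⟨l, hl, hl'⟩ := h i
        exact ⟨l, by simp [hl], by simp [hl']⟩

lemma zmod2_align : ∀ x x0 y0 f : ZMod 2, (x = x0 ↔ f + x0 + y0 = y0) → x = f := by
  decide

lemma rank_of_bf (C G : Set (G2 × G2)) (hz : ∀ f : G2, (f, 0) ∈ G)
    (α : Ordinal.{0}) : ∀ (n : ℕ) (a b : Fin (n + 1) → G2 × G2) (A : Set (G2 × G2)),
    A ⊆ Set.range a → (∀ i, (b i).2 = 0) →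
    @BFEquiv L316 (G2 × G2) (G2 × G2) (MStruct C) (MStruct G) α (n + 1) a b →
    rnkGE C α A := by
  induction α using WellFoundedLT.induction with
  | ind α ih =>
    intro n a b A hA hb h
    rw [BFEquiv] at h
    rw [rnkGE]
    intro β hβ f
    obtain ⟨⟨f', g⟩, hx⟩ := (h.2 β hβ).2 (f + (a 0).1 + (b 0).1, 0)
    have hb' : ∀ i, ((Fin.snoc b (f + (a 0).1 + (b 0).1, 0) : Fin (n + 1 + 1) → G2 × G2) i).2 = 0 := by
      intro i
      refine Fin.lastCases ?_ (fun i => ?_) i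
      · simp
      · simp [hb]
    have hx' := hx
    rw [BFEquiv] at hx'
    have hm := match_of_qf C G _ _ hx'.1
    have hf : f' = f := by
      funext m
      have := hm.left (Fin.last _) (Fin.castSucc 0) m
      rw [Fin.snoc_last, Fin.snoc_castSucc, Fin.snoc_last, Fin.snoc_castSucc] at this
      exact zmod2_align _ _ _ _ this
    subst hf
    have hsub : insert (f', g) A ⊆
        Set.range (Fin.snoc a (f', g) : Fin (n + 1 + 1) → G2 × G2) := by
      rintro p (rfl | hp)
      · exact ⟨Fin.last _, by simp⟩
      · obtain ⟨i, rfl⟩ := hA hp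
        exact ⟨Fin.castSucc i, by simp⟩
    refine ⟨g, fun p hp => ?_, fun p hp q hq l hl m hml => ?_, ih β hβ _ _ _ _ hsub hb' hx⟩
    · obtain ⟨i, rfl⟩ := hsub hp
      rw [hm.mem]
      have key : ∀ p : G2 × G2, p.2 = 0 → p ∈ G := by
        rintro ⟨u, v⟩ hv
        obtain rfl : v = 0 := hv
        exact hz u
      exact key _ (hb' i)
    · obtain ⟨i, rfl⟩ := hsub hp
      obtain ⟨j, rfl⟩ := hsub hq
      refine ((hm.right i j m).2 ⟨fun k hk => ?_, by rw [hb', hb']⟩).2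
      exact (hm.left i j k).1 (hl k (lt_of_le_of_lt hk hml))

end G2sys

/-- Let `C ∈ 𝐂` and let `G` be given by letting `G[f]` be the subgroup of which `C[f]` is a
coset.  If `rnk^C(∅) ≥ α` then `(𝔐, C) ≡_α (𝔐, G)`; and if `rnk^C(∅) < ∞` then
`(𝔐, C) ≢_∞ (𝔐, G)`. -/
theorem bfEquiv_of_rank (C G : Set (G2 × G2)) (hC : InC C)
    (hG : ∀ f : G2, ∃ H : AddSubgroup G2, {g : G2 | (f, g) ∈ G} = (H : Set G2) ∧
      ∃ g₀ : G2, {g : G2 | (f, g) ∈ C} = (fun h => g₀ + h) '' (H : Set G2))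
    (α : Ordinal.{0}) :
    (rnkGE C α ∅ →
      @BFEquiv L316 (G2 × G2) (G2 × G2) (MStruct C) (MStruct G) α 0
        (fun i => i.elim0) (fun i => i.elim0)) ∧
    ((¬ ∀ β : Ordinal.{0}, rnkGE C β ∅) →
      ¬ ∀ β : Ordinal.{0}, @BFEquiv L316 (G2 × G2) (G2 × G2) (MStruct C) (MStruct G) β 0
        (fun i => i.elim0) (fun i => i.elim0)) := by
  constructor
  · intro h
    exact bf_of_rank C G hG α 0 _ _ ∅ (fun p hp => hp.elim) (Set.empty_subset _) h
      (fun i => i.elim0)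
  · intro h hbf
    refine h fun β => ?_
    have hz : ∀ f : G2, (f, (0 : G2)) ∈ G := by
      intro f
      obtain ⟨H, hH, -⟩ := hG f
      exact (Set.ext_iff.1 hH 0).2 H.zero_mem
    have hβ := hbf (Order.succ β)
    rw [BFEquiv] at hβ
    obtain ⟨x, hx⟩ := (hβ.2 β (Order.lt_succ β)).2 (0, 0)
    exact rank_of_bf C G hz β 0 _ _ ∅ (Set.empty_subset _)
      (fun i => by
        refine Fin.lastCases ?_ (fun j => j.elim0) i
        rw [Fin.snoc_last]) hx
end

section
/- For every ordinal α with 1 ≤ α < ω₁ there exists C ∈ 𝐂 with rnk^C(∅) = α, i.e., rnk^C(∅) ≥ α but not rnk^C(∅) ≥ α+1. -/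
namespace G2sys

theorem rnkGE_iff (C : Set (G2 × G2)) (α : Ordinal.{0}) (A : Set (G2 × G2)) :
    rnkGE C α A ↔ ∀ β : Ordinal.{0}, β < α → ∀ f : G2, ∃ g : G2,
      insert (f, g) A ⊆ C ∧ Coherent (insert (f, g) A) ∧ rnkGE C β (insert (f, g) A) := by
  rw [rnkGE]

theorem rnkGE_mono_s17 {C : Set (G2 × G2)} {α β : Ordinal.{0}} {A : Set (G2 × G2)} (h : β ≤ α)
    (hA : rnkGE C α A) : rnkGE C β A := by
  rw [rnkGE_iff] at hA ⊢
  exact fun γ hγ => hA γ (hγ.trans_le h)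

/-- drop the first `n` coordinates -/
def sh (n : ℕ) (f : G2) : G2 := fun i => f (i + n)

/-- unit vector -/
def un (k : ℕ) : G2 := fun i => if i = k then 1 else 0

/-- the point in the cone of `m` coded by `h` -/
def io (m : ℕ) (h : G2) : G2 :=
  fun i => if i ≤ m then 0 else if i = m + 1 then 1 else h (i - (m + 2))

/-- `f` starts with exactly `m+1` zeros followed by a nonzero value -/
def Cone (m : ℕ) (f : G2) : Prop := f (m + 1) ≠ 0 ∧ ∀ i ≤ m, f i = 0

/-- answer in the cone of `k` -/
def an (k : ℕ) (g : G2) : G2 :=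
  fun i => if i = k then 1 else if i < k + 2 then 0 else g (i - (k + 2))

theorem sh_io (m : ℕ) (h : G2) : sh (m + 2) (io m h) = h := by
  funext i
  simp only [sh, io]
  rw [if_neg (by omega), if_neg (by omega)]
  congr 1
  omega

theorem sh_an (m : ℕ) (h : G2) : sh (m + 2) (an m h) = h := by
  funext i
  simp only [sh, an]
  rw [if_neg (by omega), if_neg (by omega)]
  congr 1
  omega

theorem cone_io (m : ℕ) (h : G2) : Cone m (io m h) := by
  constructor
  · simp [io]
  · intro i hi
    simp [io, hi]

theorem zmod2 (x : ZMod 2) (h : x ≠ 0) : x = 1 := by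
  revert x; decide

theorem io_sh {m : ℕ} {f : G2} (hf : Cone m f) : io m (sh (m + 2) f) = f := by
  funext i
  simp only [sh, io]
  split_ifs with h1 h2
  · exact (hf.2 i h1).symm
  · subst h2; exact (zmod2 _ hf.1).symm
  · congr 1; omega

theorem cone_unique {m n : ℕ} {f : G2} (h : Cone m f) (h' : Cone n f) : m = n := by
  rcases lt_trichotomy m n with h1 | h1 | h1
  · exact absurd (h'.2 (m + 1) h1) h.1
  · exact h1
  · exact absurd (h.2 (n + 1) h1) h'.1

theorem io_ne_zero (m : ℕ) (h : G2) : io m h ≠ 0 := by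
  intro e
  exact (cone_io m h).1 (by rw [e]; rfl)

/-- finitely supported functions with zero sum -/
noncomputable def Hz : AddSubgroup G2 :=
  ((Finsupp.linearCombination (ZMod 2) (fun _ : ℕ => (1 : ZMod 2))).toAddMonoidHom.ker).map
    (Finsupp.coeFnAddHom (ι := ℕ) (M := ZMod 2))

theorem un_eq (k : ℕ) : un k = ⇑(Finsupp.single k (1 : ZMod 2)) := by
  funext i
  simp [un, Finsupp.single_apply, eq_comm]

theorem un_mem (k : ℕ) : un k - un 0 ∈ Hz := by
  refine ⟨Finsupp.single k 1 - Finsupp.single 0 1, ?_, ?_⟩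
  · simp
  · rw [map_sub, un_eq, un_eq]; rfl

theorem zero_not_mem : (0 : G2) - un 0 ∉ Hz := by
  rintro ⟨s, hs, he⟩
  have : s = - Finsupp.single 0 1 := by
    apply DFunLike.coe_injective
    rw [un_eq] at he
    have he' : (s : ℕ → ZMod 2) = 0 - ⇑(Finsupp.single 0 (1 : ZMod 2)) := he
    rw [he', zero_sub]; rfl
  subst this
  simp at hs

/-- The glued system. -/
def glue (c : ℕ → G2 → G2) (H : ℕ → G2 → AddSubgroup G2) : Set (G2 × G2) :=
  {p | (p.1 = 0 → p.2 - un 0 ∈ Hz) ∧ ∀ m, Cone m p.1 →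
    sh (m + 2) p.2 - p.2 m • c m (sh (m + 2) p.1) ∈ H m (sh (m + 2) p.1)}

/-- system from coset data -/
def sys (c : G2 → G2) (H : G2 → AddSubgroup G2) : Set (G2 × G2) :=
  {p | p.2 - c p.1 ∈ H p.1}

theorem exists_sys {C : Set (G2 × G2)} (h : InC C) : ∃ c H, C = sys c H := by
  choose H c hc using h
  refine ⟨c, H, ?_⟩
  ext ⟨f, g⟩
  have := Set.ext_iff.1 (hc f) g
  simp only [Set.mem_ofPred_eq, Set.mem_image, SetLike.mem_coe] at this
  rw [this]
  simp only [sys, Set.mem_ofPred_eq]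
  constructor
  · rintro ⟨x, hx, rfl⟩
    simpa using hx
  · intro hx
    exact ⟨_, hx, by simp⟩

theorem inC_sys (c : G2 → G2) (H : G2 → AddSubgroup G2) : InC (sys c H) := by
  intro f
  refine ⟨H f, c f, ?_⟩
  ext g
  simp only [sys, Set.mem_ofPred_eq, Set.mem_image, SetLike.mem_coe]
  constructor
  · intro hx
    exact ⟨_, hx, by simp⟩
  · rintro ⟨x, hx, rfl⟩
    simpa using hx

/-- fiber subgroup in a cone -/
def Hc (m : ℕ) (c : G2) (H : AddSubgroup G2) : AddSubgroup G2 where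
  carrier := {g | sh (m + 2) g - g m • c ∈ H}
  zero_mem' := by
    have : sh (m + 2) (0 : G2) - (0 : G2) m • c = 0 := by
      funext i; simp [sh]
    simp only [Set.mem_ofPred_eq]
    rw [this]; exact H.zero_mem
  add_mem' := by
    intro a b ha hb
    simp only [Set.mem_ofPred_eq] at ha hb ⊢
    have := H.add_mem ha hb
    convert this using 1
    funext i; simp [sh]; ring
  neg_mem' := by
    intro a ha
    simp only [Set.mem_ofPred_eq] at ha ⊢
    have := H.neg_mem ha
    convert this using 1
    funext i
    simp only [sh, Pi.sub_apply, Pi.neg_apply, Pi.smul_apply, smul_eq_mul]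
    ring

theorem inC_glue (c : ℕ → G2 → G2) (H : ℕ → G2 → AddSubgroup G2) : InC (glue c H) := by
  have key : ∀ f : G2, ∃ (K : AddSubgroup G2) (g₀ : G2), ∀ g, (f, g) ∈ glue c H ↔ g - g₀ ∈ K := by
    intro f
    by_cases hf : f = 0
    · refine ⟨Hz, un 0, fun g => ?_⟩
      constructor
      · exact fun h => h.1 hf
      · exact fun h => ⟨fun _ => h, fun m hm => absurd (by simp [hf]) hm.1⟩
    · by_cases hm : ∃ m, Cone m f
      · obtain ⟨m, hm⟩ := hm
        refine ⟨Hc m (c m (sh (m + 2) f)) (H m (sh (m + 2) f)), 0, fun g => ?_⟩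
        rw [sub_zero]
        constructor
        · exact fun h => h.2 m hm
        · refine fun h => ⟨fun e => absurd e hf, fun n hn => ?_⟩
          obtain rfl := cone_unique hm hn
          exact h
      · refine ⟨⊤, 0, fun g => ?_⟩
        simp only [AddSubgroup.mem_top, iff_true]
        exact ⟨fun e => absurd e hf, fun n hn => absurd ⟨n, hn⟩ hm⟩
  choose K g₀ hK using key
  have : glue c H = sys g₀ K := by
    ext ⟨f, g⟩
    exact hK f g
  rw [this]
  exact inC_sys _ _

/-- trace of `B` on the cone of `m` -/
def tr (m : ℕ) (B : Set (G2 × G2)) : Set (G2 × G2) :=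
  {p | ∃ g, (io m p.1, g) ∈ B ∧ p.2 = sh (m + 2) g}

theorem tr_insert (m : ℕ) (h g : G2) (B : Set (G2 × G2)) :
    tr m (insert (io m h, g) B) = insert (h, sh (m + 2) g) (tr m B) := by
  ext ⟨h', k⟩
  simp only [tr, Set.mem_ofPred_eq, Set.mem_insert_iff, Prod.mk.injEq]
  constructor
  · rintro ⟨g', ⟨h1, rfl⟩ | h1, rfl⟩
    · left
      refine ⟨?_, rfl⟩
      rw [← sh_io m h', h1, sh_io]
    · exact Or.inr ⟨g', h1, rfl⟩
  · rintro (⟨rfl, rfl⟩ | ⟨g', h1, rfl⟩)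
    · exact ⟨g, Or.inl ⟨rfl, rfl⟩, rfl⟩
    · exact ⟨g', Or.inr h1, rfl⟩

theorem upper (c : ℕ → G2 → G2) (H : ℕ → G2 → AddSubgroup G2) (m : ℕ) (g₀ : G2)
    (hg : g₀ m = 1) (γ : Ordinal.{0}) : ∀ B : Set (G2 × G2), (0, g₀) ∈ B →
      rnkGE (glue c H) γ B → rnkGE (sys (c m) (H m)) γ (tr m B) := by
  induction γ using WellFoundedLT.induction with
  | ind γ ih =>
  intro B hB hr
  rw [rnkGE_iff] at hr ⊢
  intro β hβ h
  obtain ⟨g, h1, h2, h3⟩ := hr β hβ (io m h)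
  refine ⟨sh (m + 2) g, ?_⟩
  have h4 := ih β hβ _ (Set.mem_insert_of_mem _ hB) h3
  rw [← tr_insert]
  refine ⟨?_, ?_, h4⟩
  · rintro ⟨h', k⟩ ⟨g', hg', rfl⟩
    have h5 := (h1 hg').2 m (cone_io m h')
    have h6 : g' m = 1 := by
      rw [← hg]
      refine h2 _ hg' _ (Set.mem_insert_of_mem _ hB) (m + 1) ?_ m (by omega)
      intro i hi
      exact (cone_io m h').2 i (by omega)
    simp only [h6, one_smul, sh_io] at h5
    exact h5
  · rintro ⟨h', k'⟩ ⟨g', hg', e⟩ ⟨h'', k''⟩ ⟨g'', hg'', e'⟩ n hn i hi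
    simp only at e e' hn hg' hg'' ⊢
    subst e e'
    refine h2 _ hg' _ hg'' (n + (m + 2)) ?_ (i + (m + 2)) (by omega)
    intro j hj
    simp only [io]
    split_ifs with a b
    · rfl
    · rfl
    · exact hn _ (by omega)

open Classical in
/-- default answer -/
noncomputable def df (k : ℕ) (f : G2) : G2 := if ∃ i ≤ k, f i ≠ 0 then 0 else un k

/-- the invariant of the strategy -/
def Inv (k : ℕ) (A A' : Set (G2 × G2)) : Prop :=
  ∀ p ∈ A, (¬ Cone k p.1 ∧ p.2 = df k p.1) ∨
    ∃ q ∈ A', p.1 = io k q.1 ∧ p.2 = an k q.2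

theorem inv_sub {c : ℕ → G2 → G2} {H : ℕ → G2 → AddSubgroup G2} {k : ℕ} {A A' : Set (G2 × G2)}
    (h : Inv k A A') (hA' : A' ⊆ sys (c k) (H k)) : A ⊆ glue c H := by
  rintro ⟨f, g⟩ hp
  rcases h _ hp with ⟨h1, h2⟩ | ⟨q, hq, h1, h2⟩
  · simp only at h1 h2
    subst h2
    constructor
    · rintro rfl
      have : df k 0 = un k := by simp [df]
      simp only [this]
      exact un_mem k
    · intro m hm
      have hmk : m ≠ k := by rintro rfl; exact h1 hm
      have e : sh (m + 2) (df k f) = 0 ∧ df k f m = 0 := by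
        unfold df
        split_ifs with hi
        · exact ⟨rfl, rfl⟩
        · have : k < m := by
            by_contra hlt
            exact hi ⟨m + 1, by omega, hm.1⟩
          constructor
          · funext i
            simp only [sh, un]
            rw [if_neg (by omega)]; rfl
          · simp [un, hmk]
      simp only [e.1, e.2, zero_smul, sub_zero]
      exact AddSubgroup.zero_mem _
  · simp only at h1 h2
    subst h1 h2
    constructor
    · exact fun e => absurd e (io_ne_zero _ _)
    · intro m hm
      obtain rfl := cone_unique hm (cone_io k q.1)
      have : an m q.2 m = 1 := by simp [an]
      simp only [this, one_smul, sh_io, sh_an]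
      exact hA' hq

theorem df_io (k : ℕ) (f h g : G2) (hf : ¬ Cone k f) (n : ℕ)
    (hn : ∀ m < n, f m = io k h m) : ∀ m < n, df k f m = an k g m := by
  have hn2 : n < k + 2 := by
    by_contra hlt
    apply hf
    constructor
    · rw [hn _ (by omega)]; exact (cone_io k h).1
    · intro i hi
      rw [hn _ (by omega)]; exact (cone_io k h).2 i hi
  intro m hm
  by_cases hk : m = k
  · subst hk
    have : ¬ ∃ i ≤ m, f i ≠ 0 := by
      rintro ⟨i, hi, hi'⟩
      apply hi'
      rw [hn _ (by omega)]; exact (cone_io m h).2 i hi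
    simp [df, this, un, an]
  · have : an k g m = 0 := by
      simp only [an]
      rw [if_neg hk, if_pos (by omega)]
    rw [this]
    unfold df
    split_ifs
    · rfl
    · simp [un, hk]

theorem inv_coh {k : ℕ} {A A' : Set (G2 × G2)}
    (h : Inv k A A') (hA' : Coherent A') : Coherent A := by
  rintro ⟨f, g⟩ hp ⟨f', g'⟩ hp' n hn
  simp only at hn ⊢
  rcases h _ hp with ⟨h1, h2⟩ | ⟨q, hq, h1, h2⟩ <;>
  rcases h _ hp' with ⟨h1', h2'⟩ | ⟨q', hq', h1', h2'⟩ <;>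
  simp only at h1 h2 h1' h2' <;> subst h2 <;> subst h2'
  · intro m hm
    by_cases hk : m = k
    · subst hk
      have : (∃ i ≤ m, f i ≠ 0) ↔ ∃ i ≤ m, f' i ≠ 0 := by
        constructor
        · rintro ⟨i, hi, hi'⟩
          exact ⟨i, hi, by rwa [← hn i (by omega)]⟩
        · rintro ⟨i, hi, hi'⟩
          exact ⟨i, hi, by rwa [hn i (by omega)]⟩
      simp only [df, this]
    · have : ∀ f, df k f m = 0 := by
        intro f
        unfold df
        split_ifs
        · rfl
        · simp [un, hk]
      rw [this, this]
  · subst h1'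
    exact df_io k _ _ _ h1 n hn
  · subst h1
    intro m hm
    exact (df_io k _ _ _ h1' n (fun i hi => (hn i hi).symm) m hm).symm
  · subst h1 h1'
    intro m hm
    simp only [an]
    split_ifs with a b
    · rfl
    · rfl
    · refine hA' _ hq _ hq' (n - (k + 2)) ?_ _ (by omega)
      intro i hi
      have := hn (i + (k + 2)) (by omega)
      have e : ∀ h, io k h (i + (k + 2)) = h i := fun h => congrFun (sh_io k h) i
      rwa [e, e] at this

theorem lower (c : ℕ → G2 → G2) (H : ℕ → G2 → AddSubgroup G2) (k : ℕ) (γ : Ordinal.{0}) :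
    ∀ A A' : Set (G2 × G2), Inv k A A' → A' ⊆ sys (c k) (H k) → Coherent A' →
      rnkGE (sys (c k) (H k)) γ A' → rnkGE (glue c H) γ A := by
  induction γ using WellFoundedLT.induction with
  | ind γ ih =>
  intro A A' hI hs hc hr
  rw [rnkGE_iff]
  intro β hβ f
  by_cases hf : Cone k f
  · rw [rnkGE_iff] at hr
    obtain ⟨g, h1, h2, h3⟩ := hr β hβ (sh (k + 2) f)
    have hI' : Inv k (insert (f, an k g) A) (insert (sh (k + 2) f, g) A') := by
      intro p hp
      rcases hp with rfl | hp
      · exact Or.inr ⟨_, Set.mem_insert _ _, (io_sh hf).symm, rfl⟩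
      · rcases hI p hp with h | ⟨q, hq, h⟩
        · exact Or.inl h
        · exact Or.inr ⟨q, Set.mem_insert_of_mem _ hq, h⟩
    exact ⟨an k g, inv_sub hI' h1, inv_coh hI' h2, ih β hβ _ _ hI' h1 h2 h3⟩
  · have hI' : Inv k (insert (f, df k f) A) A' := by
      intro p hp
      rcases hp with rfl | hp
      · exact Or.inl ⟨hf, rfl⟩
      · exact hI p hp
    exact ⟨df k f, inv_sub hI' hs, inv_coh hI' hc, ih β hβ _ _ hI' hs hc (rnkGE_mono_s17 hβ.le hr)⟩

theorem base : ∃ C : Set (G2 × G2), InC C ∧ rnkGE C 1 ∅ ∧ ¬ rnkGE C (1 + 1) ∅ := by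
  classical
  refine ⟨sys (fun f => if f = 0 then un 0 else 0) (fun _ => ⊥), inC_sys _ _, ?_, ?_⟩
  · rw [rnkGE_iff]
    intro β hβ f
    obtain rfl : β = 0 := Order.lt_one_iff.1 hβ
    refine ⟨if f = 0 then un 0 else 0, ?_, ?_, ?_⟩
    · rintro p (rfl | hp)
      · simp [sys]
      · exact absurd hp (by simp)
    · rintro p (rfl | hp) q (rfl | hq)
      · intro n _ m _; rfl
      · exact absurd hq (by simp)
      · exact absurd hp (by simp)
      · exact absurd hp (by simp)
    · rw [rnkGE_iff]
      intro β hβ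
      exact absurd hβ (by simp)
  · intro h
    rw [rnkGE_iff] at h
    obtain ⟨g, h1, h2, h3⟩ := h 1 (by rw [← Order.succ_eq_add_one]; exact Order.lt_succ _) 0
    rw [rnkGE_iff] at h3
    obtain ⟨g', h1', h2', h3'⟩ := h3 0 zero_lt_one (un 1)
    have e1 : g = un 0 := by
      have := h1 (Set.mem_insert _ _)
      simpa [sys, sub_eq_zero] using this
    have hne : un 1 ≠ 0 := by
      intro e
      have := congrFun e 1
      simp [un] at this
    have e2 : g' = 0 := by
      have := h1' (Set.mem_insert _ _)
      simpa [sys, sub_eq_zero, hne] using this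
    subst e1 e2
    have := h2' _ (Set.mem_insert _ _) _ (Set.mem_insert_of_mem _ (Set.mem_insert _ _)) 1
      (by intro m hm; obtain rfl : m = 0 := by omega
          simp [un]) 0 (by omega)
    simp [un] at this

theorem main (α : Ordinal.{0}) : 1 ≤ α → α < (Cardinal.aleph 1).ord →
    ∃ C : Set (G2 × G2), InC C ∧ rnkGE C α ∅ ∧ ¬ rnkGE C (α + 1) ∅ := by
  induction α using WellFoundedLT.induction with
  | ind α ih =>
  intro h1 h2
  rcases h1.eq_or_lt with rfl | h1
  · exact base
  have hcount : (Set.Ico 1 α).Countable := by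
    have hI : (Set.Iio α).Countable := by
      rw [← Cardinal.le_aleph0_iff_set_countable, Cardinal.mk_Iio_ordinal]
      rw [Cardinal.lt_ord, ← Cardinal.succ_aleph0, Order.lt_succ_iff] at h2
      exact Cardinal.lift_le_aleph0.2 h2
    exact hI.mono fun x hx => hx.2
  obtain ⟨b, hb⟩ := hcount.exists_eq_range ⟨1, le_refl _, h1⟩
  have hbm : ∀ n, b n ∈ Set.Ico 1 α := fun n => hb ▸ Set.mem_range_self n
  have hex : ∀ n, ∃ c H, rnkGE (sys c H) (b (n / 2)) ∅ ∧ ¬ rnkGE (sys c H) (b (n / 2) + 1) ∅ := by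
    intro n
    obtain ⟨C, hC, hC'⟩ := ih (b (n / 2)) (hbm _).2 (hbm _).1 ((hbm _).2.trans h2)
    obtain ⟨c, H, rfl⟩ := exists_sys hC
    exact ⟨c, H, hC'⟩
  choose c H hlo hup using hex
  refine ⟨glue c H, inC_glue c H, ?_, ?_⟩
  · rw [rnkGE_iff]
    intro β hβ f
    have : ∃ j, β ≤ b j := by
      rcases eq_zero_or_pos β with rfl | h0
      · exact ⟨0, zero_le⟩
      · have : β ∈ Set.range b := by
          rw [← hb]; exact ⟨Order.one_le_iff_pos.2 h0, hβ⟩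
        obtain ⟨j, rfl⟩ := this
        exact ⟨j, le_rfl⟩
    obtain ⟨j, hj⟩ := this
    have : ∃ k, k / 2 = j ∧ ¬ Cone k f := by
      by_cases hf : Cone (2 * j) f
      · refine ⟨2 * j + 1, by omega, fun h => ?_⟩
        have := cone_unique hf h
        omega
      · exact ⟨2 * j, by omega, hf⟩
    obtain ⟨k, rfl, hk⟩ := this
    have hI' : Inv k (insert (f, df k f) ∅) ∅ := by
      rintro p (rfl | hp)
      · exact Or.inl ⟨hk, rfl⟩
      · exact absurd hp (by simp)
    have hc : Coherent ∅ := fun p hp => absurd hp (by simp)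
    exact ⟨df k f, inv_sub hI' (Set.empty_subset (sys (c k) (H k))), inv_coh hI' hc,
      lower c H k β _ _ hI' (Set.empty_subset _) hc (rnkGE_mono_s17 hj (hlo k))⟩
  · intro h
    rw [rnkGE_iff] at h
    obtain ⟨g, h3, h4, h5⟩ := h α (by rw [← Order.succ_eq_add_one]; exact Order.lt_succ _) 0
    have hg := (h3 (Set.mem_insert _ _)).1 rfl
    simp only at hg
    have : ∃ m, g m ≠ 0 := by
      by_contra hcon
      push Not at hcon
      have : g = 0 := funext hcon
      subst this
      exact zero_not_mem hg
    obtain ⟨m, hm⟩ := this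
    have h6 := upper c H m g (zmod2 _ hm) α _ (Set.mem_insert _ _) h5
    have h7 : tr m (insert (0, g) ∅) = ∅ := by
      ext ⟨h', k⟩
      simp [tr, io_ne_zero]
    rw [h7] at h6
    exact hup m (rnkGE_mono_s17 (by rw [← Order.succ_eq_add_one]; exact Order.succ_le_of_lt (hbm _).2) h6)

end G2sys

open G2sys

/-- For every ordinal `α` with `1 ≤ α < ω₁` there is `C ∈ 𝐂` with `rnk^C(∅) = α`,
i.e. `rnk^C(∅) ≥ α` but not `rnk^C(∅) ≥ α + 1`. -/
theorem exists_inC_of_rank (α : Ordinal.{0}) (h1 : 1 ≤ α) (h2 : α < (Cardinal.aleph 1).ord) :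
    ∃ C : Set (G2 × G2), InC C ∧ rnkGE C α ∅ ∧ ¬ rnkGE C (α + 1) ∅ :=
  main α h1 h2
end

section
/- Every model of the theory REF(bin) has Scott rank strictly less than ω₁, where REF(bin) is the first-order theory in the language {E_n : n < ω} (each E_n binary) asserting: each E_n is an equivalence relation, E_0 has exactly two classes, E_{n+1} refines E_n, and each E_n-class is the union of exactly two E_{n+1}-classes. -/
open FirstOrder

universe u v w

open ScottTools PP


namespace RefBin

/-- Shifted relations: level `0` is the trivial relation, level `k+1` is `E_k`. -/
def R {M : Type w} [(LP ℕ).Structure M] : ℕ → M → M → Prop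
  | 0, _, _ => True
  | k + 1, a, b => Rel k a b

/-- The working form of the axioms. -/
structure Good (M : Type w) [(LP ℕ).Structure M] : Prop where
  refl : ∀ (k : ℕ) (a : M), R k a a
  symm : ∀ (k : ℕ) (a b : M), R k a b → R k b a
  trans : ∀ (k : ℕ) (a b c : M), R k a b → R k b c → R k a c
  mono : ∀ (k : ℕ) (a b : M), R (k + 1) a b → R k a b
  split : ∀ (k : ℕ) (a : M), ∃ b, R k b a ∧ ¬ R (k + 1) b a
  bin : ∀ (k : ℕ) (x y z : M), R k x z → R k y z → ¬ R (k + 1) x z → ¬ R (k + 1) y z →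
    R (k + 1) x y

theorem good_of (M : Type w) [(LP ℕ).Structure M]
    (hequiv : ∀ n : ℕ, Equivalence (fun a b : M => Rel n a b))
    (htwo : ∃ a b : M, ¬ Rel 0 a b ∧ ∀ c : M, Rel 0 c a ∨ Rel 0 c b)
    (hrefine : ∀ (n : ℕ) (a b : M), Rel (n + 1) a b → Rel n a b)
    (hsplit : ∀ (n : ℕ) (a : M), ∃ b c : M, Rel n b a ∧ Rel n c a ∧ ¬ Rel (n + 1) b c ∧
      ∀ d : M, Rel n d a → (Rel (n + 1) d b ∨ Rel (n + 1) d c)) : Good M := by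
  have hs : ∀ (k : ℕ) (a b : M), R k a b → R k b a := by
    intro k a b
    cases k with
    | zero => intro _; trivial
    | succ k => exact fun h => (hequiv k).symm h
  have ht : ∀ (k : ℕ) (a b c : M), R k a b → R k b c → R k a c := by
    intro k a b c
    cases k with
    | zero => intro _ _; trivial
    | succ k => exact fun h h' => (hequiv k).trans h h'
  have hsp : ∀ (k : ℕ) (a : M), ∃ b c : M, R k b a ∧ R k c a ∧ ¬ R (k + 1) b c ∧
      ∀ d : M, R k d a → (R (k + 1) d b ∨ R (k + 1) d c) := by
    intro k a
    cases k with
    | zero =>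
      obtain ⟨b, c, h, h'⟩ := htwo
      exact ⟨b, c, trivial, trivial, h, fun d _ => h' d⟩
    | succ k => exact hsplit k a
  refine ⟨?_, hs, ht, ?_, ?_, ?_⟩
  · intro k a
    cases k with
    | zero => trivial
    | succ k => exact (hequiv k).refl a
  · intro k a b h
    cases k with
    | zero => trivial
    | succ k => exact hrefine k a b h
  · intro k a
    obtain ⟨b, c, hb, hc, hbc, -⟩ := hsp k a
    by_cases h : R (k + 1) b a
    · exact ⟨c, hc, fun h' => hbc (ht _ _ _ _ h (hs _ _ _ h'))⟩
    · exact ⟨b, hb, h⟩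
  · intro k x y z hx hy hnx hny
    obtain ⟨b, c, hb, hc, hbc, hall⟩ := hsp k z
    have hz : R k z z := ht _ _ _ _ (hs _ _ _ hx) hx
    rcases hall x hx with h1 | h1 <;> rcases hall y hy with h2 | h2 <;>
      rcases hall z hz with h3 | h3
    all_goals first
      | exact ht _ _ _ _ h1 (hs _ _ _ h2)
      | exact absurd (ht _ _ _ _ h1 (hs _ _ _ h3)) hnx
      | exact absurd (ht _ _ _ _ h2 (hs _ _ _ h3)) hny

section
variable {M : Type w} [(LP ℕ).Structure M]

/-- Concrete version of equality of quantifier-free types. -/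
def Q {n : ℕ} (a b : Fin n → M) : Prop :=
  (∀ i j, a i = a j ↔ b i = b j) ∧ ∀ k i j, R k (a i) (a j) ↔ R k (b i) (b j)

theorem Q.symm {n : ℕ} {a b : Fin n → M} (h : Q a b) : Q b a :=
  ⟨fun i j => (h.1 i j).symm, fun k i j => (h.2 k i j).symm⟩

/-- The relation symbol `E_k`. -/
def sym (k : ℕ) : (LP ℕ).Relations 2 := (⟨⟨rfl⟩, k⟩ : PLift (2 = 2) × ℕ)

theorem qf_iff {n : ℕ} (a b : Fin n → M) : QFEquiv (LP ℕ) M M a b ↔ Q a b := by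
  constructor
  · intro h
    refine ⟨fun i j => ?_, fun k i j => ?_⟩
    · have := h (Language.Term.equal (Language.Term.var i) (Language.Term.var j))
        (Language.BoundedFormula.IsAtomic.equal _ _).isQF
      simpa using this
    · cases k with
      | zero => exact Iff.rfl
      | succ k =>
        have := h (Language.Relations.formula (sym k) ![Language.Term.var i, Language.Term.var j])
          (Language.BoundedFormula.IsAtomic.rel _ _).isQF
        rw [Language.Formula.realize_rel, Language.Formula.realize_rel] at this
        have e : ∀ c : Fin n → M, (fun m => Language.Term.realize (L := LP ℕ) c
          ((![Language.Term.var i, Language.Term.var j] : Fin 2 → (LP ℕ).Term (Fin n)) m))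
            = ![c i, c j] := by
          intro c; funext m; fin_cases m <;> rfl
        rw [e, e] at this
        exact this
  · intro h φ hφ
    have ht : ∀ t : (LP ℕ).Term (Fin n ⊕ Fin 0), ∃ i : Fin n, t = Language.Term.var (Sum.inl i) := by
      intro t
      cases t with
      | var v =>
        rcases v with i | i
        · exact ⟨i, rfl⟩
        · exact i.elim0
      | func f _ => exact Empty.elim f
    unfold Language.Formula.Realize
    induction hφ with
    | falsum => exact Iff.rfl
    | of_isAtomic hat =>
      cases hat with
      | equal t₁ t₂ =>
        obtain ⟨i, rfl⟩ := ht t₁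
        obtain ⟨j, rfl⟩ := ht t₂
        simpa using h.1 i j
      | rel S ts =>
        obtain rfl := S.1.down
        obtain ⟨k, rfl⟩ : ∃ k, S = sym k := ⟨S.2, rfl⟩
        choose f hf using ht
        obtain ⟨i, hi⟩ : ∃ i, ts 0 = Language.Term.var (Sum.inl i) := ⟨_, hf _⟩
        obtain ⟨j, hj⟩ : ∃ i, ts 1 = Language.Term.var (Sum.inl i) := ⟨_, hf _⟩
        rw [Language.BoundedFormula.realize_rel, Language.BoundedFormula.realize_rel]
        have e : ∀ c : Fin n → M, (fun m => Language.Term.realize (Sum.elim c default) (ts m))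
            = ![c i, c j] := by
          intro c; funext m; fin_cases m
          · simp [hi]
          · simp [hj]
        rw [e, e]
        exact h.2 (k + 1) i j
    | imp _ _ h1 h2 =>
      rw [Language.BoundedFormula.realize_imp, Language.BoundedFormula.realize_imp]
      exact imp_congr h1 h2

/-- Abbreviation for the back-and-forth relation on `M`. -/
abbrev BF (α : Ordinal.{w}) (n : ℕ) (a b : Fin n → M) : Prop := BFEquiv (LP ℕ) M M α n a b

theorem bf_iff {α : Ordinal.{w}} {n : ℕ} {a b : Fin n → M} : BF α n a b ↔
    Q a b ∧ ∀ β : Ordinal.{w}, β < α →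
      (∀ x : M, ∃ y : M, BF β (n + 1) (Fin.snoc a x) (Fin.snoc b y)) ∧
      (∀ y : M, ∃ x : M, BF β (n + 1) (Fin.snoc a x) (Fin.snoc b y)) := by
  unfold BF
  rw [BFEquiv, qf_iff]

theorem bf_q {α : Ordinal.{w}} {n : ℕ} {a b : Fin n → M} (h : BF α n a b) : Q a b :=
  (bf_iff.1 h).1

theorem bf_mono {α β : Ordinal.{w}} (hβ : β ≤ α) {n : ℕ} {a b : Fin n → M} (h : BF α n a b) :
    BF β n a b := by
  rw [bf_iff] at h ⊢
  exact ⟨h.1, fun γ hγ => h.2 γ (hγ.trans_le hβ)⟩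

theorem bf_forth {α β : Ordinal.{w}} (hβ : β < α) {n : ℕ} {a b : Fin n → M} (h : BF α n a b)
    (x : M) : ∃ y : M, BF β (n + 1) (Fin.snoc a x) (Fin.snoc b y) :=
  ((bf_iff.1 h).2 β hβ).1 x

theorem bf_symm (α : Ordinal.{w}) : ∀ {n : ℕ} {a b : Fin n → M}, BF α n a b → BF α n b a := by
  induction α using WellFoundedLT.induction with
  | ind α ih =>
    intro n a b h
    rw [bf_iff] at h ⊢
    refine ⟨h.1.symm, fun β hβ => ⟨fun x => ?_, fun x => ?_⟩⟩
    · obtain ⟨y, hy⟩ := (h.2 β hβ).2 x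
      exact ⟨y, ih β hβ hy⟩
    · obtain ⟨y, hy⟩ := (h.2 β hβ).1 x
      exact ⟨y, ih β hβ hy⟩

theorem bf_refl (α : Ordinal.{w}) : ∀ {n : ℕ} (a : Fin n → M), BF α n a a := by
  induction α using WellFoundedLT.induction with
  | ind α ih =>
    intro n a
    rw [bf_iff]
    exact ⟨⟨fun _ _ => Iff.rfl, fun _ _ _ => Iff.rfl⟩,
      fun β hβ => ⟨fun x => ⟨x, ih β hβ _⟩, fun x => ⟨x, ih β hβ _⟩⟩⟩

/-- A symmetric relation preserved by forth steps gives `≡_∞`. -/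
theorem bf_of_system (G : ∀ n : ℕ, (Fin n → M) → (Fin n → M) → Prop)
    (hq : ∀ n a b, G n a b → Q a b) (hs : ∀ n a b, G n a b → G n b a)
    (hf : ∀ n a b, G n a b → ∀ x, ∃ y, G (n + 1) (Fin.snoc a x) (Fin.snoc b y))
    (α : Ordinal.{w}) : ∀ n a b, G n a b → BF α n a b := by
  induction α using WellFoundedLT.induction with
  | ind α ih =>
    intro n a b h
    rw [bf_iff]
    refine ⟨hq _ _ _ h, fun β hβ => ⟨fun x => ?_, fun x => ?_⟩⟩
    · obtain ⟨y, hy⟩ := hf _ _ _ h x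
      exact ⟨y, ih β hβ _ _ _ hy⟩
    · obtain ⟨y, hy⟩ := hf _ _ _ (hs _ _ _ h) x
      exact ⟨y, ih β hβ _ _ _ (hs _ _ _ hy)⟩

theorem snoc_last {n : ℕ} (a : Fin n → M) (x : M) :
    (Fin.snoc a x : Fin (n + 1) → M) (Fin.last n) = x := Fin.snoc_last (α := fun _ => M) x a

theorem snoc_cast {n : ℕ} (a : Fin n → M) (x : M) (i : Fin n) :
    (Fin.snoc a x : Fin (n + 1) → M) i.castSucc = a i :=
  Fin.snoc_castSucc (α := fun _ => M) x a i

theorem bf_extend (β : Ordinal.{w}) (s : Finset M) : ∀ {n : ℕ} {a b : Fin n → M},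
    BF (β + (s.card : Ordinal.{w})) n a b → ∃ (m : ℕ) (a' b' : Fin m → M) (e : Fin n → Fin m),
      (∀ i, a' (e i) = a i) ∧ (∀ i, b' (e i) = b i) ∧ (∀ x ∈ s, ∃ j, a' j = x) ∧
      BF β m a' b' := by
  classical
  induction s using Finset.induction_on with
  | empty =>
    intro n a b h
    refine ⟨n, a, b, id, fun _ => rfl, fun _ => rfl, by simp, by simpa using h⟩
  | insert x s hx ih =>
    intro n a b h
    rw [Finset.card_insert_of_notMem hx] at h
    have hlt : β + (s.card : Ordinal.{w}) < β + ((s.card + 1 : ℕ) : Ordinal.{w}) := by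
      gcongr
      exact Nat.lt_succ_self _
    obtain ⟨y, hy⟩ := bf_forth hlt h x
    obtain ⟨m, a', b', e, ha, hb, hsub, hbf⟩ := ih hy
    refine ⟨m, a', b', fun i => e i.castSucc, fun i => ?_, fun i => ?_, ?_, hbf⟩
    · rw [ha, snoc_cast]
    · rw [hb, snoc_cast]
    · intro z hz
      rcases Finset.mem_insert.1 hz with rfl | hz
      · exact ⟨e (Fin.last n), by rw [ha, snoc_last]⟩
      · exact hsub z hz

/-- The `E_∞`-class. -/
def Cl (x : M) : Set M := {z | ∀ k, R k z x}

open Ordinal in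
theorem color_le {β : Ordinal.{w}} {n : ℕ} {a b : Fin n → M}
    (h : BF (β + ω) n a b) (i : Fin n) : (Cl (a i)).encard ≤ (Cl (b i)).encard := by
  refine ENat.forall_natCast_le_iff_le.1 fun m hm => ?_
  obtain ⟨t, hts, htm⟩ := Set.exists_subset_encard_eq hm
  have hfin : t.Finite := Set.finite_of_encard_eq_coe htm
  have h' : BF (β + (hfin.toFinset.card : Ordinal.{w})) n a b := by
    refine bf_mono ?_ h
    gcongr
    exact (natCast_lt_omega0 _).le
  obtain ⟨m', a', b', e, ha, hb, hsub, hbf⟩ := bf_extend β _ h'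
  have hq := bf_q hbf
  have : Nonempty (Fin m') := ⟨e i⟩
  choose! f hf using hsub
  rw [← htm]
  refine Set.encard_le_encard_of_injOn (f := fun x => b' (f x)) ?_ ?_
  · intro x hx k
    have h1 := hts hx k
    rw [← hf x (hfin.mem_toFinset.2 hx), ← ha i, hq.2, hb] at h1
    exact h1
  · intro x hx y hy hxy
    rw [← hf x (hfin.mem_toFinset.2 hx), ← hf y (hfin.mem_toFinset.2 hy), hq.1]
    exact hxy

open Ordinal in
theorem color_eq {β : Ordinal.{w}} {n : ℕ} {a b : Fin n → M}
    (h : BF (β + ω) n a b) (i : Fin n) : (Cl (a i)).encard = (Cl (b i)).encard :=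
  le_antisymm (color_le h i) (color_le (bf_symm _ h) i)

/-- The level-`k` nodes of `u` and `v` are witnessed `α`-equivalent. -/
def X (α : Ordinal.{w}) (k : ℕ) (u v : M) : Prop :=
  ∃ (n : ℕ) (a b : Fin n → M) (i : Fin n), BF α n a b ∧ R k (a i) u ∧ R k (b i) v

theorem X_symm {α : Ordinal.{w}} {k : ℕ} {u v : M} : X α k u v → X α k v u := by
  rintro ⟨n, a, b, i, h, h1, h2⟩
  exact ⟨n, b, a, i, bf_symm _ h, h2, h1⟩

theorem X_mono {α β : Ordinal.{w}} (hβ : β ≤ α) {k : ℕ} {u v : M} : X α k u v → X β k u v := by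
  rintro ⟨n, a, b, i, h, h1, h2⟩
  exact ⟨n, a, b, i, bf_mono hβ h, h1, h2⟩

theorem X_congr (hg : Good M) {α : Ordinal.{w}} {k : ℕ} {u v u' v' : M} (hu : R k u u')
    (hv : R k v v') : X α k u v → X α k u' v' := by
  rintro ⟨n, a, b, i, h, h1, h2⟩
  exact ⟨n, a, b, i, h, hg.trans _ _ _ _ h1 hu, hg.trans _ _ _ _ h2 hv⟩

theorem off_of_bf (hg : Good M) {α β : Ordinal.{w}} (hαβ : α < β) {n : ℕ} {a b : Fin n → M}
    (h : BF β n a b) (i : Fin n) (l : ℕ) (x y : M) (hx : R l x (a i)) (hy : R l y (b i))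
    (hnx : ¬ R (l + 1) x (a i)) (hny : ¬ R (l + 1) y (b i)) : X α (l + 1) x y := by
  obtain ⟨y', hy'⟩ := bf_forth hαβ h x
  have hq := bf_q hy'
  have key : ∀ k, R k x (a i) ↔ R k y' (b i) := by
    intro k
    have := hq.2 k (Fin.last n) i.castSucc
    simpa only [snoc_last, snoc_cast] using this
  refine ⟨n + 1, _, _, Fin.last n, hy', ?_, ?_⟩
  · rw [snoc_last]; exact hg.refl _ _
  · rw [snoc_last]
    exact hg.bin l _ _ (b i) ((key l).1 hx) hy (fun h => hnx ((key _).2 h)) hny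

open Ordinal in
theorem X_forth (hg : Good M) {α : Ordinal.{w}} {k : ℕ} {u v : M} (h : X (α + ω + 1) k u v)
    (x : M) (hx : R k x u) : ∃ y, R k y v ∧ (Cl x).encard = (Cl y).encard ∧
      ∀ m z t, R m z x → R m t y → ¬ R (m + 1) z x → ¬ R (m + 1) t y → X α (m + 1) z t := by
  obtain ⟨n, a, b, i, h, h1, h2⟩ := h
  obtain ⟨y, hy⟩ := bf_forth (lt_add_one (α + ω)) h x
  have hq := bf_q hy
  have key : ∀ k, R k x (a i) ↔ R k y (b i) := by
    intro k
    have := hq.2 k (Fin.last n) i.castSucc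
    simpa only [snoc_last, snoc_cast] using this
  refine ⟨y, hg.trans _ _ _ _ ((key k).1 (hg.trans _ _ _ _ hx (hg.symm _ _ _ h1))) h2, ?_, ?_⟩
  · have := color_eq hy (Fin.last n)
    simpa only [snoc_last] using this
  · intro m z t h1 h2 h3 h4
    have hlt : α < α + ω := by simpa using omega0_pos
    refine off_of_bf hg hlt hy (Fin.last n) m z t ?_ ?_ ?_ ?_ <;> rw [snoc_last] <;> assumption

theorem Good.mono_le (hg : Good M) {k l : ℕ} (hkl : k ≤ l) {a b : M} (h : R l a b) : R k a b := by
  induction l, hkl using Nat.le_induction with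
  | base => exact h
  | succ l _ ih => exact ih (hg.mono _ _ _ h)

theorem reps (hg : Good M) (k : ℕ) : ∃ S : Finset M, ∀ x, ∃ s ∈ S, R k x s := by
  classical
  induction k with
  | zero =>
    rcases isEmpty_or_nonempty M with h | ⟨⟨m⟩⟩
    · exact ⟨∅, fun x => h.elim x⟩
    · exact ⟨{m}, fun x => ⟨m, by simp, trivial⟩⟩
  | succ k ih =>
    obtain ⟨S, hS⟩ := ih
    choose f hf hf' using hg.split k
    refine ⟨S ∪ S.image f, fun x => ?_⟩
    obtain ⟨s, hs, hx⟩ := hS x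
    by_cases h : R (k + 1) x s
    · exact ⟨s, Finset.mem_union_left _ hs, h⟩
    · exact ⟨f s, Finset.mem_union_right _ (Finset.mem_image_of_mem _ hs),
        hg.bin k _ _ s hx (hf s) h (hf' s)⟩

open Ordinal in
theorem X_stab (hg : Good M) : ∃ α : Ordinal.{w}, α < ω₁ ∧
    ∀ β < ω₁, ∀ k u v, X (M := M) α k u v → X β k u v := by
  have hS0 := reps hg
  choose S hS using hS0
  let C := Σ k : ℕ, {x : M // x ∈ S k} × {x : M // x ∈ S k}
  have hc : ∀ p : C, ∃ β : Ordinal.{w}, β < ω₁ ∧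
      ((∃ γ < ω₁, ¬ X γ p.1 p.2.1.1 p.2.2.1) → ¬ X β p.1 p.2.1.1 p.2.2.1) := by
    intro p
    by_cases h : ∃ γ < ω₁, ¬ X γ p.1 p.2.1.1 p.2.2.1
    · obtain ⟨γ, h1, h2⟩ := h
      exact ⟨γ, h1, fun _ => h2⟩
    · exact ⟨0, omega_pos 1, fun h' => absurd h' h⟩
  choose B hB hB' using hc
  refine ⟨⨆ p, B p, iSup_lt_omega_one hB, ?_⟩
  intro β hβ k u v hX
  obtain ⟨s, hs, hus⟩ := hS k u
  obtain ⟨t, ht, hvt⟩ := hS k v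
  have h1 := X_congr hg hus hvt hX
  by_contra hcon
  have h2 : ¬ X β k s t := fun h => hcon (X_congr hg (hg.symm _ _ _ hus) (hg.symm _ _ _ hvt) h)
  refine hB' ⟨k, ⟨s, hs⟩, ⟨t, ht⟩⟩ ⟨β, hβ, h2⟩ (X_mono ?_ h1)
  exact Ordinal.le_iSup B ⟨k, ⟨s, hs⟩, ⟨t, ht⟩⟩

/-- The back-and-forth system. -/
def G (α : Ordinal.{w}) (n : ℕ) (a b : Fin n → M) : Prop :=
  Nonempty (Fin n) ∧ Q a b ∧ (∀ i, (Cl (a i)).encard = (Cl (b i)).encard) ∧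
  ∀ i l x y, R l x (a i) → R l y (b i) → (∀ j, ¬ R (l + 1) x (a j)) → (∀ j, ¬ R (l + 1) y (b j)) →
    X α (l + 1) x y

theorem G_symm {α : Ordinal.{w}} (n : ℕ) (a b : Fin n → M) (h : G α n a b) : G α n b a :=
  ⟨h.1, h.2.1.symm, fun i => (h.2.2.1 i).symm,
    fun i l x y h1 h2 h3 h4 => X_symm (h.2.2.2 i l y x h2 h1 h4 h3)⟩

theorem Q_snoc (hg : Good M) {n : ℕ} {a b : Fin n → M} (h : Q a b) {x y : M}
    (he : ∀ j, a j = x ↔ b j = y) (hr : ∀ k j, R k (a j) x ↔ R k (b j) y) :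
    Q (Fin.snoc a x : Fin (n + 1) → M) (Fin.snoc b y : Fin (n + 1) → M) := by
  refine ⟨fun i j => ?_, fun k i j => ?_⟩
  · refine Fin.lastCases ?_ (fun i => ?_) i <;> refine Fin.lastCases ?_ (fun j => ?_) j <;>
      simp only [snoc_last, snoc_cast]
    · rw [eq_comm, he, eq_comm]
    · exact he i
    · exact h.1 i j
  · have hsy : ∀ u v : M, R k u v ↔ R k v u := fun u v => ⟨hg.symm _ _ _, hg.symm _ _ _⟩
    refine Fin.lastCases ?_ (fun i => ?_) i <;> refine Fin.lastCases ?_ (fun j => ?_) j <;>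
      simp only [snoc_last, snoc_cast]
    · exact ⟨fun _ => hg.refl _ _, fun _ => hg.refl _ _⟩
    · rw [hsy, hr, hsy]
    · exact hr k i
    · exact h.2 k i j

theorem Cl_congr (hg : Good M) {x y : M} (h : ∀ k, R k x y) : Cl x = Cl y := by
  ext z
  exact ⟨fun hz k => hg.trans _ _ _ _ (hz k) (h k),
    fun hz k => hg.trans _ _ _ _ (hz k) (hg.symm _ _ _ (h k))⟩

/-- Assembling `G` for extended tuples. -/
theorem G_snoc (hg : Good M) {α : Ordinal.{w}} {n : ℕ} {a b : Fin n → M} (h : G α n a b) {x y : M}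
    (he : ∀ j, a j = x ↔ b j = y) (hr : ∀ k j, R k (a j) x ↔ R k (b j) y)
    (hc : (Cl x).encard = (Cl y).encard)
    (ho : ∀ l z t, R l z x → R l t y → ¬ R (l + 1) z x → ¬ R (l + 1) t y →
      (∃ j, R l z (a j) ∧ R l t (b j)) ∨ X α (l + 1) z t) :
    G α (n + 1) (Fin.snoc a x) (Fin.snoc b y) := by
  refine ⟨⟨Fin.last n⟩, Q_snoc hg h.2.1 he hr, fun i => ?_, fun i l z t h1 h2 h3 h4 => ?_⟩
  · refine Fin.lastCases ?_ (fun i => ?_) i <;> simp only [snoc_last, snoc_cast]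
    · exact hc
    · exact h.2.2.1 i
  · have h3' : ∀ j, ¬ R (l + 1) z (a j) := fun j => by
      have := h3 j.castSucc; rwa [snoc_cast] at this
    have h4' : ∀ j, ¬ R (l + 1) t (b j) := fun j => by
      have := h4 j.castSucc; rwa [snoc_cast] at this
    have h3l := h3 (Fin.last n)
    have h4l := h4 (Fin.last n)
    rw [snoc_last] at h3l h4l
    revert h1 h2
    refine Fin.lastCases ?_ (fun i => ?_) i <;> simp only [snoc_last, snoc_cast] <;> intro h1 h2
    · rcases ho l z t h1 h2 h3l h4l with ⟨j, hj, hj'⟩ | hX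
      · exact h.2.2.2 j l z t hj hj' h3' h4'
      · exact hX
    · exact h.2.2.2 i l z t h1 h2 h3' h4'

theorem fresh {n : ℕ} {a b : Fin n → M} (hq : Q a b) (i : Fin n)
    (hc : (Cl (a i)).encard = (Cl (b i)).encard) (x : M) (hx : x ∈ Cl (a i))
    (hnx : ∀ j, a j ≠ x) : ∃ y ∈ Cl (b i), ∀ j, b j ≠ y := by
  by_contra! hcon
  set J : Set (Fin n) := {j | b j ∈ Cl (b i)} with hJ
  have hsub : Cl (b i) ⊆ b '' J := by
    intro y hy
    obtain ⟨j, rfl⟩ := hcon y hy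
    exact ⟨j, hy, rfl⟩
  have hsub' : insert x (a '' J) ⊆ Cl (a i) := by
    rintro z (rfl | ⟨j, hj, rfl⟩)
    · exact hx
    · exact fun k => (hq.2 k j i).2 (hj k)
  have hnot : x ∉ a '' J := by
    rintro ⟨j, -, hj⟩
    exact hnx j hj
  have him : b '' J = (Function.extend a b id) '' (a '' J) := by
    rw [Set.image_image]
    refine Set.image_congr fun j _ => ?_
    have hf : Function.FactorsThrough b a := fun p q hpq => (hq.1 p q).1 hpq
    exact (hf.extend_apply id j).symm
  have h1 : (a '' J).encard + 1 ≤ (a '' J).encard := by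
    rw [← Set.encard_insert_of_notMem hnot]
    calc _ ≤ (Cl (a i)).encard := Set.encard_le_encard hsub'
      _ = (Cl (b i)).encard := hc
      _ ≤ (b '' J).encard := Set.encard_le_encard hsub
      _ ≤ (a '' J).encard := by rw [him]; exact Set.encard_image_le _ _
  have hfin : (a '' J).encard ≠ ⊤ := Set.encard_ne_top_iff.2 ((Set.toFinite J).image a)
  exact absurd h1 (not_le.2 ((ENat.lt_add_one_iff hfin).2 le_rfl))

open Ordinal in
theorem G_forth (hg : Good M) {α : Ordinal.{w}}
    (hα : ∀ k u v, X (M := M) α k u v → X (α + ω + 1) k u v)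
    (n : ℕ) (a b : Fin n → M) (h : G α n a b) (x : M) :
    ∃ y, G α (n + 1) (Fin.snoc a x) (Fin.snoc b y) := by
  have hq := h.2.1
  by_cases hx : ∃ i, x ∈ Cl (a i)
  · obtain ⟨i, hi⟩ := hx
    obtain ⟨y, hy, he⟩ : ∃ y ∈ Cl (b i), ∀ j, a j = x ↔ b j = y := by
      by_cases hex : ∃ j, a j = x
      · obtain ⟨j, rfl⟩ := hex
        exact ⟨b j, fun k => (hq.2 k j i).1 (hi k), fun j' => hq.1 j' j⟩
      · push Not at hex
        obtain ⟨y, hy, hny⟩ := fresh hq i (h.2.2.1 i) x hi hex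
        exact ⟨y, hy, fun j => iff_of_false (hex j) (hny j)⟩
    refine ⟨y, G_snoc hg h he (fun k j => ?_) ?_ ?_⟩
    · have e1 : R k (a j) x ↔ R k (a j) (a i) :=
        ⟨fun h => hg.trans _ _ _ _ h (hi k), fun h => hg.trans _ _ _ _ h (hg.symm _ _ _ (hi k))⟩
      have e2 : R k (b j) y ↔ R k (b j) (b i) :=
        ⟨fun h => hg.trans _ _ _ _ h (hy k), fun h => hg.trans _ _ _ _ h (hg.symm _ _ _ (hy k))⟩
      rw [e1, e2, hq.2]
    · rw [Cl_congr hg hi, Cl_congr hg hy]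
      exact h.2.2.1 i
    · intro l z t h1 h2 _ _
      exact Or.inl ⟨i, hg.trans _ _ _ _ h1 (hi l), hg.trans _ _ _ _ h2 (hy l)⟩
  · -- `x` lies in no class of an old element: find the maximal level of agreement
    have hx' : ∀ i, ∃ k, ¬ R k x (a i) := by
      intro i
      by_contra! hcon
      exact hx ⟨i, hcon⟩
    choose f hf using hx'
    have hex : ∃ k, ∀ i, ¬ R k x (a i) :=
      ⟨Finset.univ.sup f, fun i hR => hf i (hg.mono_le (Finset.le_sup (Finset.mem_univ i)) hR)⟩
    classical
    obtain ⟨l, hl1, i, hi⟩ : ∃ l, (∀ j, ¬ R (l + 1) x (a j)) ∧ ∃ i, R l x (a i) := by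
      rcases hk : Nat.find hex with _ | l
      · exfalso
        have h0 := Nat.find_spec hex
        rw [hk] at h0
        exact h0 h.1.some trivial
      · refine ⟨l, hk ▸ Nat.find_spec hex, ?_⟩
        have := Nat.find_min hex (m := l) (by omega)
        push Not at this
        exact this
    obtain ⟨y0, hy0, hny0⟩ := hg.split l (b i)
    have hny0' : ∀ j, ¬ R (l + 1) y0 (b j) := by
      intro j hj
      have h1 : R l (b j) (b i) := hg.trans _ _ _ _ (hg.symm _ _ _ (hg.mono _ _ _ hj)) hy0
      have h2 : ¬ R (l + 1) (b j) (b i) := fun h => hny0 (hg.trans _ _ _ _ hj h)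
      rw [← hq.2] at h1 h2
      exact hl1 j (hg.bin l _ _ _ hi h1 (hl1 i) h2)
    have hX := h.2.2.2 i l x y0 hi hy0 hl1 hny0'
    obtain ⟨y, hy, hc, ho⟩ := X_forth hg (hα _ _ _ hX) x (hg.refl _ _)
    have hyl : R l y (b i) := hg.trans _ _ _ _ (hg.mono _ _ _ hy) hy0
    have hny : ∀ j, ¬ R (l + 1) y (b j) :=
      fun j hj => hny0' j (hg.trans _ _ _ _ (hg.symm _ _ _ hy) hj)
    refine ⟨y, G_snoc hg h (fun j => iff_of_false ?_ ?_) (fun k j => ?_) hc ?_⟩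
    · rintro rfl; exact hl1 j (hg.refl _ _)
    · rintro rfl; exact hny j (hg.refl _ _)
    · rcases Nat.lt_or_ge l k with hlk | hkl
      · refine iff_of_false (fun h => hl1 j ?_) (fun h => hny j ?_)
        · exact hg.mono_le hlk (hg.symm _ _ _ h)
        · exact hg.mono_le hlk (hg.symm _ _ _ h)
      · have hxk := hg.mono_le hkl hi
        have hyk := hg.mono_le hkl hyl
        have e1 : R k (a j) x ↔ R k (a j) (a i) :=
          ⟨fun h => hg.trans _ _ _ _ h hxk, fun h => hg.trans _ _ _ _ h (hg.symm _ _ _ hxk)⟩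
        have e2 : R k (b j) y ↔ R k (b j) (b i) :=
          ⟨fun h => hg.trans _ _ _ _ h hyk, fun h => hg.trans _ _ _ _ h (hg.symm _ _ _ hyk)⟩
        rw [e1, e2, hq.2]
    · intro m z t h1 h2 h3 h4
      exact Or.inr (ho m z t h1 h2 h3 h4)

open Ordinal in
theorem main (hg : Good M) : ScottRank (LP ℕ) M < ω₁ := by
  obtain ⟨α, hα, hst⟩ := X_stab hg
  have hα1 : α + ω + 1 < ω₁ :=
    (Cardinal.isSuccLimit_omega 1).add_one_lt (isPrincipal_add_omega 1 hα omega0_lt_omega_one)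
  refine lt_of_le_of_lt (csInf_le' ?_) hα1
  intro n a b h γ
  rcases Nat.eq_zero_or_pos n with rfl | hn
  · have : a = b := Subsingleton.elim _ _
    subst this
    exact bf_refl γ a
  · refine bf_of_system (G α) (fun _ _ _ h => h.2.1) G_symm
      (G_forth hg (hst _ hα1)) γ n a b ?_
    have h' : BF (α + ω) n a b := bf_mono (lt_add_one _).le h
    refine ⟨⟨⟨0, hn⟩⟩, bf_q h, color_eq h', ?_⟩
    intro i l x y h1 h2 h3 h4
    have hlt : α < α + ω := by simpa using omega0_pos
    exact off_of_bf hg hlt h' i l x y h1 h2 (h3 i) (h4 i)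

end

end RefBin

/-- Every model of REF(bin) — the theory of infinitely many binarily refining equivalence
relations `E_n` — has Scott rank strictly less than `ω₁`. -/
theorem scottRank_lt_omega1_of_refBin (M : Type w) [(LP ℕ).Structure M]
    (hequiv : ∀ n : ℕ, Equivalence (fun a b : M => Rel n a b))
    (htwo : ∃ a b : M, ¬ Rel 0 a b ∧ ∀ c : M, Rel 0 c a ∨ Rel 0 c b)
    (hrefine : ∀ (n : ℕ) (a b : M), Rel (n + 1) a b → Rel n a b)
    (hsplit : ∀ (n : ℕ) (a : M), ∃ b c : M, Rel n b a ∧ Rel n c a ∧ ¬ Rel (n + 1) b c ∧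
      ∀ d : M, Rel n d a → (Rel (n + 1) d b ∨ Rel (n + 1) d c)) :
    ScottRank (LP ℕ) M < (Cardinal.aleph 1).ord := by

  have := RefBin.main (RefBin.good_of M hequiv htwo hrefine hsplit)
  rwa [Cardinal.ord_aleph]
end

section
/- Every model of the theory T_{P₃} has Scott rank strictly less than ω₁, where (P₃, ≤, δ₃) ∈ ℙ is given by P₃ = {p_n, q_n : n < ω} with the only strict order relations being p_n < q_m for n ≤ m, and δ₃ identically equal to 2. -/
open FirstOrder

universe u v w

open ScottTools PP

/-- The partial order `P₃`: elements `pₙ = Sum.inl n` and `qₙ = Sum.inr n`, where the only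
strict order relations are `pₙ < q_m` for `n ≤ m`. -/
def le3 : ℕ ⊕ ℕ → ℕ ⊕ ℕ → Prop
  | Sum.inl n, Sum.inl m => n = m
  | Sum.inl n, Sum.inr m => n ≤ m
  | Sum.inr _, Sum.inl _ => False
  | Sum.inr n, Sum.inr m => n = m

namespace TP3Proof

section general

variable {P : Type u} {M : Type w} [(LP P).Structure M]

/-- Relational form of quantifier-free equivalence. -/
def QF' {n : ℕ} (a b : Fin n → M) : Prop :=
  ∀ i j, (a i = a j ↔ b i = b j) ∧ ∀ p : P, (Rel p (a i) (a j) ↔ Rel p (b i) (b j))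

/-- The relation symbol `E_p`. -/
def sym (p : P) : (LP P).Relations 2 := (⟨⟨rfl⟩, p⟩ : PLift (2 = 2) × P)

lemma term_var {α : Type*} (t : (LP P).Term α) : ∃ i, t = Language.Term.var i := by
  cases t with
  | var i => exact ⟨i, rfl⟩
  | func f ts => exact Empty.elim f

lemma qf_iff {n : ℕ} (a b : Fin n → M) :
    QFEquiv (LP P) M M a b ↔ QF' (P := P) a b := by
  constructor
  · intro h i j
    constructor
    · have := h (Language.Term.equal (Language.Term.var i) (Language.Term.var j))
        (Language.BoundedFormula.IsAtomic.equal _ _).isQF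
      simpa [Language.Formula.realize_equal] using this
    · intro p
      have := h (Language.Relations.formula (sym p) ![Language.Term.var i, Language.Term.var j])
        (Language.BoundedFormula.IsAtomic.rel _ _).isQF
      rw [Language.Formula.realize_rel, Language.Formula.realize_rel] at this
      unfold PP.Rel
      have e : ∀ c : Fin n → M, (fun k => Language.Term.realize c
          ((![Language.Term.var i, Language.Term.var j] : Fin 2 → (LP P).Term (Fin n)) k))
          = ![c i, c j] := by
        intro c; funext k; fin_cases k <;> simp
      rw [e a, e b] at this
      exact this
  · intro h φ hφ
    have key : ∀ (v : Fin 0 → M) (φ : (LP P).BoundedFormula (Fin n) 0), φ.IsQF →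
        (φ.Realize a v ↔ φ.Realize b v) := by
      intro v φ hφ
      induction hφ with
      | falsum => exact Iff.rfl
      | of_isAtomic hat =>
        cases hat with
        | equal t₁ t₂ =>
          obtain ⟨i, rfl⟩ := term_var t₁
          obtain ⟨j, rfl⟩ := term_var t₂
          rcases i with i | i
          swap
          · exact i.elim0
          rcases j with j | j
          swap
          · exact j.elim0
          simpa [Language.BoundedFormula.realize_bdEqual] using (h i j).1
        | rel R ts =>
          rename_i l
          obtain rfl : l = 2 := R.1.down
          obtain ⟨p, rfl⟩ : ∃ p, R = sym p := ⟨R.2, rfl⟩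
          rw [Language.BoundedFormula.realize_rel, Language.BoundedFormula.realize_rel]
          obtain ⟨i, hi⟩ := term_var (ts 0)
          obtain ⟨j, hj⟩ := term_var (ts 1)
          rcases i with i | i
          swap
          · exact i.elim0
          rcases j with j | j
          swap
          · exact j.elim0
          have e : ∀ c : Fin n → M, (fun k => Language.Term.realize (Sum.elim c v) (ts k))
              = ![c i, c j] := by
            intro c; funext k; fin_cases k
            · simp [hi]
            · simp [hj]
          rw [e a, e b]
          exact (h i j).2 p
      | imp _ _ h1 h2 =>
        rw [Language.BoundedFormula.realize_imp, Language.BoundedFormula.realize_imp, h1, h2]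
    exact key _ φ hφ

abbrev BF (P : Type u) {M : Type w} [(LP P).Structure M] (α : Ordinal.{w}) {n : ℕ}
    (a b : Fin n → M) : Prop := BFEquiv (LP P) M M α n a b

lemma bf_iff (α : Ordinal.{w}) {n : ℕ} (a b : Fin n → M) :
    BF P α a b ↔ QF' (P := P) a b ∧ ∀ β < α,
      (∀ x : M, ∃ y : M, BF P β (Fin.snoc a x : Fin (n+1) → M) (Fin.snoc b y)) ∧
      (∀ y : M, ∃ x : M, BF P β (Fin.snoc a x : Fin (n+1) → M) (Fin.snoc b y)) := by
  unfold BF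
  rw [BFEquiv, qf_iff]

lemma bf_mono {α β : Ordinal.{w}} (h : β ≤ α) {n : ℕ} {a b : Fin n → M} (H : BF P α a b) :
    BF P β a b := by
  rw [bf_iff] at H ⊢
  exact ⟨H.1, fun γ hγ => H.2 γ (hγ.trans_le h)⟩

lemma bf_refl (α : Ordinal.{w}) {n : ℕ} (a : Fin n → M) : BF P α a a := by
  induction α using WellFoundedLT.induction generalizing n with
  | ind α ih =>
    rw [bf_iff]
    exact ⟨fun i j => ⟨Iff.rfl, fun p => Iff.rfl⟩,
      fun β hβ => ⟨fun x => ⟨x, ih β hβ _⟩, fun x => ⟨x, ih β hβ _⟩⟩⟩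

lemma bf_symm {α : Ordinal.{w}} {n : ℕ} {a b : Fin n → M} (H : BF P α a b) : BF P α b a := by
  induction α using WellFoundedLT.induction generalizing n with
  | ind α ih =>
    rw [bf_iff] at H ⊢
    refine ⟨fun i j => ⟨(H.1 i j).1.symm, fun p => ((H.1 i j).2 p).symm⟩, fun β hβ => ⟨fun x => ?_, fun x => ?_⟩⟩
    · obtain ⟨y, hy⟩ := (H.2 β hβ).2 x
      exact ⟨y, ih β hβ hy⟩
    · obtain ⟨y, hy⟩ := (H.2 β hβ).1 x
      exact ⟨y, ih β hβ hy⟩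

lemma bf_trans {α : Ordinal.{w}} {n : ℕ} {a b c : Fin n → M} (H : BF P α a b)
    (H' : BF P α b c) : BF P α a c := by
  induction α using WellFoundedLT.induction generalizing n with
  | ind α ih =>
    rw [bf_iff] at H H' ⊢
    refine ⟨fun i j => ⟨(H.1 i j).1.trans (H'.1 i j).1,
      fun p => ((H.1 i j).2 p).trans ((H'.1 i j).2 p)⟩, fun β hβ => ⟨fun x => ?_, fun x => ?_⟩⟩
    · obtain ⟨y, hy⟩ := (H.2 β hβ).1 x
      obtain ⟨z, hz⟩ := (H'.2 β hβ).1 y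
      exact ⟨z, ih β hβ hy hz⟩
    · obtain ⟨y, hy⟩ := (H'.2 β hβ).2 x
      obtain ⟨z, hz⟩ := (H.2 β hβ).2 y
      exact ⟨z, ih β hβ hz hy⟩

lemma snoc_comp' {n m : ℕ} (a : Fin n → M) (x : M) (f : Fin m → Fin n) :
    (Fin.snoc (a ∘ f) x : Fin (m+1) → M) = (Fin.snoc a x : Fin (n+1) → M) ∘
      (Fin.snoc (fun i => (f i).castSucc) (Fin.last n) : Fin (m+1) → Fin (n+1)) := by
  funext i
  refine Fin.lastCases ?_ (fun j => ?_) i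
  · simp
  · simp

lemma bf_comp {α : Ordinal.{w}} {n m : ℕ} {a b : Fin n → M} (H : BF P α a b)
    (f : Fin m → Fin n) : BF P α (a ∘ f) (b ∘ f) := by
  induction α using WellFoundedLT.induction generalizing n m with
  | ind α ih =>
    rw [bf_iff] at H ⊢
    refine ⟨fun i j => H.1 (f i) (f j), fun β hβ => ⟨fun x => ?_, fun x => ?_⟩⟩
    · obtain ⟨y, hy⟩ := (H.2 β hβ).1 x
      refine ⟨y, ?_⟩
      rw [snoc_comp', snoc_comp']
      exact ih β hβ hy _
    · obtain ⟨y, hy⟩ := (H.2 β hβ).2 x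
      refine ⟨y, ?_⟩
      rw [snoc_comp', snoc_comp']
      exact ih β hβ hy _

/-- Extend a partial equivalence to a finite set. -/
lemma bf_extend (S : Finset M) : ∀ (β : Ordinal.{w}) {n : ℕ} {a b : Fin n → M},
    BF P (β + (S.card : ℕ)) a b →
    ∃ (m : ℕ) (a' b' : Fin m → M) (f : Fin n → Fin m), BF P β a' b' ∧ a = a' ∘ f ∧ b = b' ∘ f ∧
      ∀ z ∈ S, ∃ j, a' j = z := by
  classical
  induction S using Finset.induction_on with
  | empty =>
    intro β n a b H
    exact ⟨n, a, b, id, by simpa using H, rfl, rfl, by simp⟩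
  | insert z S hz ih =>
    intro β n a b H
    have H' : BF P ((β + 1) + (S.card : ℕ)) a b := by
      have e : β + 1 + ((S.card : ℕ) : Ordinal.{w}) = β + (((insert z S).card : ℕ) : Ordinal.{w}) := by
        rw [Finset.card_insert_of_notMem hz, add_assoc]
        congr 1
        rw [add_comm S.card 1]
        push_cast
        rfl
      rw [e]; exact H
    obtain ⟨m, a', b', f, h1, rfl, rfl, h4⟩ := ih (β+1) H'
    rw [bf_iff] at h1
    obtain ⟨y, hy⟩ := (h1.2 β (by simp)).1 z
    refine ⟨m+1, Fin.snoc a' z, Fin.snoc b' y, fun i => (f i).castSucc, hy, ?_, ?_, ?_⟩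
    · funext i; simp
    · funext i; simp
    · intro w hw
      rcases Finset.mem_insert.1 hw with rfl | hw
      · exact ⟨Fin.last m, by simp⟩
      · obtain ⟨j, hj⟩ := h4 w hw
        exact ⟨j.castSucc, by simpa using hj⟩

/-- Equivalence of single elements. -/
def B (P : Type u) {M : Type w} [(LP P).Structure M] (α : Ordinal.{w}) (x y : M) : Prop :=
  BF P α (fun _ : Fin 1 => x) (fun _ : Fin 1 => y)

lemma B_of_bf {α : Ordinal.{w}} {n : ℕ} {a b : Fin n → M} (H : BF P α a b) (i : Fin n) :
    B P α (a i) (b i) := bf_comp (m := 1) H (fun _ => i)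

end general

section codes

variable {M : Type w} [(LP (ℕ ⊕ ℕ)).Structure M]

/-- Two-valued coding functions for the relations. -/
structure Codes (M : Type w) [(LP (ℕ ⊕ ℕ)).Structure M] where
  p : M → ℕ → Bool
  q : M → ℕ → Bool
  hp : ∀ n x y, Rel (Sum.inl n : ℕ ⊕ ℕ) x y ↔ p x n = p y n
  hq : ∀ n x y, Rel (Sum.inr n : ℕ ⊕ ℕ) x y ↔ (∀ i ≤ n, p x i = p y i) ∧ q x n = q y n

lemma exists_codes (hM : ModelsTP le3 (fun _ => 2) M) : Nonempty (Codes M) := by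
  classical
  obtain ⟨heq, hle, hsplit, -⟩ := hM
  -- two elements both inequivalent to a third one are equivalent
  have pig : ∀ (r : ℕ ⊕ ℕ) (a x y : M), (∀ p, le3 p r → p ≠ r → Rel p x a) →
      (∀ p, le3 p r → p ≠ r → Rel p y a) → ¬ Rel r x a → ¬ Rel r y a → Rel r x y := by
    intro r a x y hx hy hxa hya
    obtain ⟨f, -, -, h3⟩ := hsplit r a
    obtain ⟨i, hi⟩ := h3 x hx
    obtain ⟨j, hj⟩ := h3 y hy
    obtain ⟨k, hk⟩ := h3 a (fun p _ _ => (heq p).refl a)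
    have hik : i ≠ k := by
      rintro rfl; exact hxa ((heq r).trans hi ((heq r).symm hk))
    have hjk : j ≠ k := by
      rintro rfl; exact hya ((heq r).trans hj ((heq r).symm hk))
    have hij : i = j := by
      have h1 := i.2
      have h2 := j.2
      have h3 := k.2
      apply Fin.ext
      have := Fin.val_ne_of_ne hik
      have := Fin.val_ne_of_ne hjk
      simp only at h1 h2 h3
      omega
    subst hij
    exact (heq r).trans hi ((heq r).symm hj)
  by_cases hne : Nonempty M
  swap
  · exact ⟨⟨fun _ _ => true, fun _ _ => true, fun _ x => (hne ⟨x⟩).elim, fun _ x => (hne ⟨x⟩).elim⟩⟩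
  obtain ⟨x0⟩ := hne
  have hp : ∀ n x y, Rel (Sum.inl n : ℕ ⊕ ℕ) x y ↔
      (decide (Rel (Sum.inl n : ℕ ⊕ ℕ) x x0) = decide (Rel (Sum.inl n : ℕ ⊕ ℕ) y x0)) := by
    intro n x y
    rw [decide_eq_decide]
    constructor
    · intro h
      exact ⟨fun h' => (heq _).trans ((heq _).symm h) h', fun h' => (heq _).trans h h'⟩
    · intro h
      by_cases hx : Rel (Sum.inl n : ℕ ⊕ ℕ) x x0
      · exact (heq _).trans hx ((heq _).symm (h.1 hx))
      · have hmin : ∀ z : M, ∀ p, le3 p (Sum.inl n) → p ≠ Sum.inl n → Rel p z x0 := by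
          rintro z (k | k) h1 h2
          · exact absurd (congrArg Sum.inl h1) h2
          · exact h1.elim
        exact pig _ x0 x y (hmin x) (hmin y) hx (fun h' => hx (h.2 h'))
  let s : ℕ → Setoid M := fun m =>
    ⟨fun x y => ∀ i ≤ m, Rel (Sum.inl i : ℕ ⊕ ℕ) x y,
      ⟨fun x i _ => (heq _).refl x, fun h i hi => (heq _).symm (h i hi),
        fun h h' i hi => (heq _).trans (h i hi) (h' i hi)⟩⟩
  let rep : ℕ → M → M := fun m x => Quotient.out (Quotient.mk (s m) x)
  have hrep : ∀ m x, ∀ i ≤ m, Rel (Sum.inl i : ℕ ⊕ ℕ) (rep m x) x := fun m x =>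
    Quotient.exact (s := s m) (Quotient.out_eq (Quotient.mk (s m) x))
  have hrepeq : ∀ m x y, (∀ i ≤ m, Rel (Sum.inl i : ℕ ⊕ ℕ) x y) → rep m x = rep m y := by
    intro m x y h
    exact congrArg Quotient.out (Quotient.sound (s := s m) h)
  refine ⟨⟨fun x n => decide (Rel (Sum.inl n : ℕ ⊕ ℕ) x x0),
    fun x m => decide (Rel (Sum.inr m : ℕ ⊕ ℕ) x (rep m x)), hp, ?_⟩⟩
  intro m x y
  simp only [← hp]
  rw [decide_eq_decide]
  constructor
  · intro h
    have h' : ∀ i ≤ m, Rel (Sum.inl i : ℕ ⊕ ℕ) x y := fun i hi => hle (Sum.inl i) (Sum.inr m) hi x y h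
    refine ⟨h', ?_⟩
    rw [hrepeq m x y h']
    exact ⟨fun h' => (heq _).trans ((heq _).symm h) h', fun h' => (heq _).trans h h'⟩
  · rintro ⟨h', h⟩
    rw [hrepeq m x y h'] at h
    by_cases hx : Rel (Sum.inr m : ℕ ⊕ ℕ) x (rep m y)
    · exact (heq _).trans hx ((heq _).symm (h.1 hx))
    · refine pig _ (rep m y) x y ?_ ?_ hx (fun h' => hx (h.2 h'))
      · rintro (k | k) h1 h2
        · exact (heq _).trans (h' k h1) ((heq _).symm (hrep m y k h1))
        · exact absurd (congrArg Sum.inr h1) h2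
      · rintro (k | k) h1 h2
        · exact (heq _).symm (hrep m y k h1)
        · exact absurd (congrArg Sum.inr h1) h2

variable (K : Codes M)

/-- Compatibility of the pairs `(c, d)` and `(x, y)`. -/
structure Cp (K : Codes M) (c d x y : M) : Prop where
  P : ∀ n, xor (K.p c n) (K.p d n) = xor (K.p x n) (K.p y n)
  Q : ∀ m, (∀ i ≤ m, K.p c i = K.p x i) →
    xor (K.q c m) (K.q d m) = xor (K.q x m) (K.q y m)

lemma xor_lem {a b c d : Bool} : xor a b = xor c d ↔ (a = c ↔ b = d) := by
  cases a <;> cases b <;> cases c <;> cases d <;> simp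

lemma cp_iff {c d x y : M} :
    Cp K c d x y ↔ ∀ p : ℕ ⊕ ℕ, (Rel p c x ↔ Rel p d y) := by
  constructor
  · rintro ⟨h1, h2⟩ (n | m)
    · rw [K.hp, K.hp]; exact xor_lem.1 (h1 n)
    · rw [K.hq, K.hq]
      have e : (∀ i ≤ m, K.p c i = K.p x i) ↔ (∀ i ≤ m, K.p d i = K.p y i) :=
        forall_congr' fun i => imp_congr_right fun _ => xor_lem.1 (h1 i)
      rw [← e]
      exact and_congr_right fun h => xor_lem.1 (h2 m h)
  · intro h
    have h1 : ∀ n, xor (K.p c n) (K.p d n) = xor (K.p x n) (K.p y n) := by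
      intro n
      have := h (Sum.inl n)
      rw [K.hp, K.hp] at this
      exact xor_lem.2 this
    refine ⟨h1, fun m hm => ?_⟩
    have := h (Sum.inr m)
    rw [K.hq, K.hq] at this
    have e : ∀ i ≤ m, K.p d i = K.p y i := fun i hi => (xor_lem.1 (h1 i)).1 (hm i hi)
    exact xor_lem.2 (by tauto)

lemma Cp.symm {c d x y : M} (h : Cp K c d x y) : Cp K x y c d :=
  ⟨fun n => (h.P n).symm, fun m hm => (h.Q m fun i hi => (hm i hi).symm).symm⟩

lemma Cp.swap {c d x y : M} (h : Cp K c d x y) : Cp K d c y x := by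
  rw [cp_iff] at h ⊢
  exact fun p => (h p).symm

lemma Cp.refl (x y : M) : Cp K x y x y := ⟨fun _ => rfl, fun _ _ => rfl⟩

/-- Transitivity through a pair on the same fibre as the first one. -/
lemma Cp.trans {c d x y z w : M} (h : Cp K c d x y) (h' : Cp K c d z w)
    (e : ∀ n, K.p c n = K.p x n) : Cp K x y z w :=
  ⟨fun n => (h.P n).symm.trans (h'.P n), fun m hm =>
    (h.Q m fun i _ => e i).symm.trans (h'.Q m fun i hi => (e i).trans (hm i hi))⟩

lemma qf'_iff {n : ℕ} {a b : Fin n → M} : QF' (P := ℕ ⊕ ℕ) a b ↔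
    ∀ i j, (a i = a j ↔ b i = b j) ∧ Cp K (a i) (b i) (a j) (b j) := by
  unfold QF'
  simp only [cp_iff]

lemma qf'_snoc {n : ℕ} {a b : Fin n → M} {x y : M} (h : QF' (P := ℕ ⊕ ℕ) a b)
    (h' : ∀ i, (a i = x ↔ b i = y) ∧ Cp K (a i) (b i) x y) :
    QF' (P := ℕ ⊕ ℕ) (Fin.snoc a x : Fin (n+1) → M) (Fin.snoc b y) := by
  rw [qf'_iff K] at h ⊢
  intro i j
  refine Fin.lastCases ?_ (fun i => ?_) i
  · refine Fin.lastCases ?_ (fun j => ?_) j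
    · simpa using Cp.refl K x y
    · simp only [Fin.snoc_last, Fin.snoc_castSucc]
      exact ⟨by rw [eq_comm, (h' j).1, eq_comm], (h' j).2.symm⟩
  · refine Fin.lastCases ?_ (fun j => ?_) j
    · simpa using h' i
    · simpa using h i j

local notation "BB" => B (ℕ ⊕ ℕ)

lemma step {β : Ordinal.{w}} {c d : M} (h : BB (β+1) c d) (x : M) :
    ∃ y, BB β x y ∧ Cp K c d x y := by
  unfold B at h
  rw [bf_iff] at h
  obtain ⟨y, hy⟩ := (h.2 β (by simp)).1 x
  refine ⟨y, ?_, ?_⟩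
  · simpa only [Fin.snoc_last] using B_of_bf hy (Fin.last 1)
  · rw [bf_iff] at hy
    have := ((qf'_iff K).1 hy.1 (Fin.castSucc 0) (Fin.last 1)).2
    simpa only [Fin.snoc_last, Fin.snoc_castSucc] using this

lemma B_mono {α β : Ordinal.{w}} (h : β ≤ α) {x y : M} (H : BB α x y) : BB β x y := bf_mono h H
lemma B_symm {α : Ordinal.{w}} {x y : M} (H : BB α x y) : BB α y x := bf_symm H
lemma B_trans {α : Ordinal.{w}} {x y z : M} (H : BB α x y) (H2 : BB α y z) : BB α x z :=
  bf_trans H H2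

/-- Finite sets transfer injectively. -/
lemma exists_transfer {c d : M} (h : BB Ordinal.omega0 c d) (S : Finset M) :
    ∃ t : M → M, Set.InjOn t S ∧ ∀ z ∈ S, Cp K c d z (t z) := by
  have h' : BF (ℕ ⊕ ℕ) (0 + (S.card : ℕ)) (fun _ : Fin 1 => c) (fun _ : Fin 1 => d) := by
    refine bf_mono ?_ h
    rw [zero_add]
    exact (Ordinal.natCast_lt_omega0 _).le
  obtain ⟨m, a', b', f, h1, h2, h3, h4⟩ := bf_extend S 0 h'
  rw [bf_iff] at h1
  have hq := (qf'_iff K).1 h1.1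
  have : Nonempty (Fin m) := ⟨f 0⟩
  choose! j hj using h4
  have hc : c = a' (f 0) := congrFun h2 0
  have hd : d = b' (f 0) := congrFun h3 0
  refine ⟨fun z => b' (j z), ?_, ?_⟩
  · intro z hz w hw hzw
    have := (hq (j z) (j w)).1.2 hzw
    rwa [hj z hz, hj w hw] at this
  · intro z hz
    have := (hq (f 0) (j z)).2
    rwa [hj z hz, ← hc, ← hd] at this

/-- The index set of finite approximations. -/
abbrev Idx := Σ n : ℕ, (Fin n → Bool) × (Fin n → Bool)

/-- Finite approximations to equivalences that fix all `p`-classes. -/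
def R (K : Codes M) (β : Ordinal.{w}) (ι : Idx) : Prop :=
  ∃ c d : M, BB β c d ∧ (∀ k, K.p c k = K.p d k) ∧ (∀ k : Fin ι.1, K.p c k = ι.2.1 k) ∧
    (∀ k : Fin ι.1, xor (K.q c k) (K.q d k) = ι.2.2 k)

lemma R_mono {α β : Ordinal.{w}} (h : β ≤ α) {ι : Idx} : R K α ι → R K β ι := by
  rintro ⟨c, d, h1, h2⟩
  exact ⟨c, d, B_mono h h1, h2⟩

lemma exists_stable : ∃ α : Ordinal.{w}, Ordinal.omega0 ≤ α ∧ α < (Cardinal.aleph 1).ord ∧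
    ∀ ι, ∀ γ < (Cardinal.aleph 1).ord, R K α ι → R K γ ι := by
  classical
  have h : ∀ ι : Idx, ∃ β : Ordinal.{w}, β < (Cardinal.aleph 1).ord ∧
      ∀ γ < (Cardinal.aleph 1).ord, R K β ι → R K γ ι := by
    intro ι
    by_cases h : ∃ β < (Cardinal.aleph 1).ord, ¬ R K β ι
    · obtain ⟨β, hβ, hR⟩ := h
      exact ⟨β, hβ, fun γ _ h => (hR h).elim⟩
    · push Not at h
      exact ⟨0, Cardinal.ord_pos.2 (Cardinal.aleph_pos 1), fun γ hγ _ => h γ hγ⟩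
  choose f hf1 hf2 using h
  have hω : Ordinal.omega0.{w} < (Cardinal.aleph 1).ord := by
    rw [← Cardinal.ord_aleph0]
    exact Cardinal.ord_lt_ord.2 Cardinal.aleph0_lt_aleph_one
  have hsup : (⨆ i, f i) < (Cardinal.aleph 1).ord := by
    refine Cardinal.iSup_lt_ord_lift_of_isRegular Cardinal.isRegular_aleph_one ?_ hf1
    rw [Cardinal.mk_eq_aleph0]
    simp
  refine ⟨max Ordinal.omega0 (⨆ i, f i), le_max_left _ _, max_lt hω hsup, fun ι γ hγ hR => ?_⟩
  refine hf2 ι γ hγ (R_mono K ?_ hR)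
  exact (Ordinal.le_iSup f ι).trans (le_max_right _ _)

/-- The back-and-forth states. -/
structure State (K : Codes M) (α : Ordinal.{w}) (c₀ d₀ : M) {n : ℕ} (a b : Fin n → M) : Prop where
  pos : 0 < n
  qf : QF' (P := ℕ ⊕ ℕ) a b
  base : BB (α + 3) c₀ d₀
  diff : ∀ i k, xor (K.p c₀ k) (K.p d₀ k) = xor (K.p (a i) k) (K.p (b i) k)
  wit : ∀ i, ∃ c d, BB (α + 2) c d ∧ (∀ k, K.p c k = K.p (a i) k) ∧ Cp K c d (a i) (b i)

lemma State.symm {α : Ordinal.{w}} {c₀ d₀ : M} {n : ℕ} {a b : Fin n → M}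
    (h : State K α c₀ d₀ a b) : State K α d₀ c₀ b a where
  pos := h.pos
  qf := fun i j => ⟨(h.qf i j).1.symm, fun p => ((h.qf i j).2 p).symm⟩
  base := B_symm h.base
  diff := fun i k => by rw [Bool.xor_comm, h.diff i k, Bool.xor_comm]
  wit := fun i => by
    obtain ⟨c, d, h1, h2, h3⟩ := h.wit i
    exact ⟨d, c, B_symm h1, fun k => (xor_lem.1 (h3.P k)).1 (h2 k), h3.swap⟩

lemma State.snoc {α : Ordinal.{w}} {c₀ d₀ : M} {n : ℕ} {a b : Fin n → M}
    (h : State K α c₀ d₀ a b) {x y : M}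
    (h' : ∀ i, (a i = x ↔ b i = y) ∧ Cp K (a i) (b i) x y)
    (hw : ∃ c d, BB (α + 2) c d ∧ (∀ k, K.p c k = K.p x k) ∧ Cp K c d x y) :
    State K α c₀ d₀ (Fin.snoc a x : Fin (n+1) → M) (Fin.snoc b y) where
  pos := Nat.succ_pos n
  qf := qf'_snoc K h.qf h'
  base := h.base
  diff := fun i k => by
    refine Fin.lastCases ?_ (fun i => ?_) i
    · simp only [Fin.snoc_last]
      rw [h.diff ⟨0, h.pos⟩ k]
      exact (h' _).2.P k
    · simpa using h.diff i k
  wit := fun i => by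
    refine Fin.lastCases ?_ (fun i => ?_) i
    · simpa using hw
    · simpa using h.wit i

lemma State.step {α : Ordinal.{w}} (hω : Ordinal.omega0 ≤ α)
    (hst : ∀ ι, R K α ι → R K (α + 3) ι) {c₀ d₀ : M} {n : ℕ} {a b : Fin n → M}
    (h : State K α c₀ d₀ a b) (x : M) :
    ∃ y, State K α c₀ d₀ (Fin.snoc a x : Fin (n+1) → M) (Fin.snoc b y) := by
  classical
  have hqf := (qf'_iff K).1 h.qf
  have e12 : α + 2 = (α + 1) + 1 := by rw [add_assoc]; norm_num
  have e23 : α + 3 = (α + 2) + 1 := by rw [add_assoc]; norm_num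
  by_cases hx : ∃ j, a j = x
  · obtain ⟨j, rfl⟩ := hx
    exact ⟨b j, h.snoc K (fun i => hqf i j) (h.wit j)⟩
  push Not at hx
  by_cases hfib : ∃ i, ∀ k, K.p (a i) k = K.p x k
  · -- the fibre of `x` is already met
    obtain ⟨i, hi⟩ := hfib
    obtain ⟨c, d, hcd, hc, hC⟩ := h.wit i
    have hcd' : BB Ordinal.omega0 c d := B_mono (hω.trans (by simp)) hcd
    let J : Finset (Fin n) := Finset.univ.filter fun j =>
      (∀ k, K.p (a j) k = K.p x k) ∧ ∀ k, K.q (a j) k = K.q x k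
    obtain ⟨t, ht, htC⟩ := exists_transfer K hcd' (insert x (J.image a))
    have hcard : (J.image b).card < ((insert x (J.image a)).image t).card := by
      rw [Finset.card_image_of_injOn ht, Finset.card_insert_of_notMem
        (by simp only [Finset.mem_image, not_exists, not_and]; exact fun j _ => hx j)]
      have : (J.image b).card ≤ (J.image a).card := by
        let s : M → M := fun z => if hz : ∃ j, a j = z then b hz.choose else z
        have hs : J.image b ⊆ (J.image a).image s := by
          intro w hw
          obtain ⟨j, hj, rfl⟩ := Finset.mem_image.1 hw
          refine Finset.mem_image.2 ⟨a j, Finset.mem_image_of_mem a hj, ?_⟩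
          have hz : ∃ j', a j' = a j := ⟨j, rfl⟩
          simp only [s, dif_pos hz]
          exact (hqf _ _).1.1 hz.choose_spec
        exact (Finset.card_le_card hs).trans Finset.card_image_le
      omega
    obtain ⟨y, hy, hyb⟩ := Finset.exists_mem_notMem_of_card_lt_card hcard
    obtain ⟨z, hz, rfl⟩ := Finset.mem_image.1 hy
    have hzx : (∀ k, K.p z k = K.p x k) ∧ ∀ k, K.q z k = K.q x k := by
      rcases Finset.mem_insert.1 hz with rfl | hz
      · exact ⟨fun _ => rfl, fun _ => rfl⟩
      · obtain ⟨j, hj, rfl⟩ := Finset.mem_image.1 hz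
        exact (Finset.mem_filter.1 hj).2
    have hCz := htC z hz
    have hCx : Cp K c d x (t z) := by
      refine ⟨fun k => ?_, fun m hm => ?_⟩
      · rw [← hzx.1 k]; exact hCz.P k
      · rw [← hzx.2 m]; exact hCz.Q m fun i hi => (hm i hi).trans (hzx.1 i).symm
    have hcx : ∀ k, K.p c k = K.p x k := fun k => (hc k).trans (hi k)
    have hix : Cp K (a i) (b i) x (t z) := hC.trans K hCx hc
    have hjx : ∀ j, Cp K (a j) (b j) x (t z) := fun j =>
      (hix.trans K (hqf i j).2 hi).symm
    refine ⟨t z, h.snoc K (fun j => ⟨⟨fun e => (hx j e).elim, fun e => ?_⟩, hjx j⟩)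
      ⟨c, d, hcd, hcx, hCx⟩⟩
    exfalso
    apply hyb
    refine Finset.mem_image.2 ⟨j, ?_, e⟩
    have hpj : ∀ k, K.p (a j) k = K.p x k := fun k =>
      (xor_lem.1 ((hjx j).P k)).2 (by rw [e])
    refine Finset.mem_filter.2 ⟨Finset.mem_univ _, hpj, fun k => ?_⟩
    exact (xor_lem.1 ((hjx j).Q k fun i _ => hpj i)).2 (by rw [e])
  · -- a new fibre
    push Not at hfib
    have : Nonempty (Fin n) := ⟨⟨0, h.pos⟩⟩
    obtain ⟨i, hi⟩ := Finite.exists_max fun i => Nat.find (hfib i)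
    set l := Nat.find (hfib i) with hl
    have hil : ∀ k < l, K.p (a i) k = K.p x k := fun k hk => not_not.1 (Nat.find_min (hfib i) hk)
    obtain ⟨c, d, hcd, hc, hC⟩ := h.wit i
    rw [e12] at hcd
    obtain ⟨y, hxy, hCy⟩ := TP3Proof.step K hcd x
    have hb := h.base
    rw [e23] at hb
    obtain ⟨y₀, hxy₀, hCy₀⟩ := TP3Proof.step K hb x
    have hle1 : α + 1 ≤ α + 2 := by gcongr; norm_num
    have hyy₀ : BB (α + 1) y₀ y := B_trans (B_symm (B_mono hle1 hxy₀)) hxy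
    have hpd : ∀ k, xor (K.p (a i) k) (K.p (b i) k) = xor (K.p x k) (K.p y₀ k) := fun k =>
      (h.diff i k).symm.trans (hCy₀.P k)
    have hpy : ∀ k, K.p y₀ k = K.p y k := by
      intro k
      have h1 := hpd k
      have h2 := hC.P k
      have h3 := hCy.P k
      rw [← h2, h3] at h1
      exact (Bool.xor_right_inj.1 h1).symm
    have hR : R K (α + 3) ⟨l, fun k => K.p y₀ k, fun k => xor (K.q y₀ k) (K.q y k)⟩ :=
      hst _ (R_mono K (by simp) ⟨y₀, y, hyy₀, hpy, fun _ => rfl, fun _ => rfl⟩)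
    obtain ⟨c', d', hcd', hp', hpl, hql⟩ := hR
    rw [e23] at hcd'
    obtain ⟨y₁, hy₁, hC₁⟩ := TP3Proof.step K hcd' y₀
    have hp₁ : ∀ k, K.p y₀ k = K.p y₁ k := by
      intro k
      have h1 := hC₁.P k
      rw [hp' k] at h1
      simpa using h1.symm
    have hq₁ : ∀ m < l, K.q y m = K.q y₁ m := by
      intro m hm
      have h1 := hC₁.Q m fun i hi => hpl ⟨i, hi.trans_lt hm⟩
      have h2 := hql ⟨m, hm⟩
      simp only at h2
      rw [h1] at h2
      exact (Bool.xor_right_inj.1 h2).symm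
    have hCj : ∀ j, Cp K (a j) (b j) x y₁ := by
      intro j
      have hP : ∀ k, xor (K.p (a j) k) (K.p (b j) k) = xor (K.p x k) (K.p y₁ k) := by
        intro k
        rw [← hp₁ k, ← hpd k, ← h.diff i k, ← h.diff j k]
      refine ⟨hP, fun m hm => ?_⟩
      have hml : m < l := by
        refine lt_of_lt_of_le ?_ (hi j)
        by_contra hcon
        push Not at hcon
        exact Nat.find_spec (hfib j) (hm _ hcon)
      rw [(hqf j i).2.Q m fun k hk => (hm k hk).trans (hil k (hk.trans_lt hml)).symm,
        ← hC.Q m fun k _ => hc k,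
        hCy.Q m fun k hk => (hc k).trans (hil k (hk.trans_lt hml)), hq₁ m hml]
    refine ⟨y₁, h.snoc K (fun j => ⟨⟨fun e => (hx j e).elim, fun e => ?_⟩, hCj j⟩)
      ⟨x, y₁, B_trans hxy₀ hy₁, fun _ => rfl, Cp.refl K _ _⟩⟩
    obtain ⟨k, hk⟩ := hfib j
    exact (hk ((xor_lem.1 ((hCj j).P k)).2 (by rw [e]))).elim

lemma State.bf {α : Ordinal.{w}} (hω : Ordinal.omega0 ≤ α)
    (hst : ∀ ι, R K α ι → R K (α + 3) ι) {c₀ d₀ : M} (β : Ordinal.{w}) {n : ℕ} {a b : Fin n → M}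
    (h : State K α c₀ d₀ a b) : BF (ℕ ⊕ ℕ) β a b := by
  induction β using WellFoundedLT.induction generalizing n with
  | ind β ih =>
    rw [bf_iff]
    refine ⟨h.qf, fun γ hγ => ⟨fun x => ?_, fun x => ?_⟩⟩
    · obtain ⟨y, hy⟩ := h.step K hω hst x
      exact ⟨y, ih γ hγ hy⟩
    · obtain ⟨y, hy⟩ := h.symm.step K hω hst x
      exact ⟨y, ih γ hγ hy.symm⟩

end codes

end TP3Proof

/-- Every model of `T_{P₃}` (with `δ₃` identically `2`) has Scott rank strictly less
than `ω₁`. -/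
theorem scottRank_lt_omega1_of_TP3 (M : Type w) [(LP (ℕ ⊕ ℕ)).Structure M]
    (hM : ModelsTP le3 (fun _ => 2) M) :
    ScottRank (LP (ℕ ⊕ ℕ)) M < (Cardinal.aleph 1).ord := by
  obtain ⟨K⟩ := TP3Proof.exists_codes hM
  obtain ⟨α, hω, hα, hst⟩ := TP3Proof.exists_stable K
  have hlim : Order.IsSuccLimit (Cardinal.aleph.{w} 1).ord :=
    Cardinal.isSuccLimit_ord (Cardinal.aleph0_le_aleph 1)
  have hα3 : α + 3 < (Cardinal.aleph 1).ord := by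
    have e : α + 3 = Order.succ (Order.succ (Order.succ α)) := by
      simp only [Order.succ_eq_add_one, add_assoc]; norm_num
    rw [e]
    exact hlim.succ_lt (hlim.succ_lt (hlim.succ_lt hα))
  refine lt_of_le_of_lt (csInf_le' ?_) hα3
  intro n a b h β
  rcases Nat.eq_zero_or_pos n with rfl | hn
  · have : a = b := Subsingleton.elim _ _
    subst this
    exact TP3Proof.bf_refl (P := ℕ ⊕ ℕ) β a
  · have hqf := ((TP3Proof.bf_iff (P := ℕ ⊕ ℕ) (α + 3) a b).1 h).1
    have hle : α + 2 ≤ α + 3 := by gcongr; norm_num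
    have hstate : TP3Proof.State K α (a ⟨0, hn⟩) (b ⟨0, hn⟩) a b :=
      { pos := hn
        qf := hqf
        base := TP3Proof.B_of_bf h _
        diff := fun i k => (((TP3Proof.qf'_iff K).1 hqf) ⟨0, hn⟩ i).2.P k
        wit := fun i => ⟨a i, b i, TP3Proof.B_mono hle (TP3Proof.B_of_bf h i), fun _ => rfl,
          TP3Proof.Cp.refl K _ _⟩ }
    exact hstate.bf K hω (fun ι => hst ι _ hα3) β
end
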